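/- arXiv:math/0412354 — 5 statements merged into one kernel-verified Lean document; each statement's English description precedes it below -/
import Mathlib

section
/- Let K be a field of characteristic 0 equipped with a derivation D, let L be a differential subfield of K, and let b, a₁, …, aₙ ∈ K. If a₁, …, aₙ are differentially algebraic over L and b is differentially algebraic over the differential subfield L⟨a₁, …, aₙ⟩ generated by a₁, …, aₙ over L, then b is differentially algebraic over L. -/
/-- `b ∈ K` is differentially algebraic over the differential subfield `L` of `K`:
there are `n ∈ ℕ` and a nonzero polynomial in `n + 1` variables with coefficients in `L`
vanishing at `(b, Db, …, Dⁿb)`. -/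
def IsDifferentiallyAlgebraic {K : Type*} [Field K] (D : K → K) (L : Subfield K) (b : K) :
    Prop :=
  ∃ (n : ℕ) (P : MvPolynomial (Fin (n + 1)) K),
    P ≠ 0 ∧ (∀ m, P.coeff m ∈ L) ∧
    MvPolynomial.eval (fun i : Fin (n + 1) => D^[i.val] b) P = 0

/-!
When `L` is a differential subfield, `b` is differentially algebraic over `L` if and only if
`{b, D b, D² b, …}` has finite rank in the matroid of algebraic independence over `L`. Indeed a
relation among these elements makes some `Dⁿ b` algebraic over `L(b, …, Dⁿ⁻¹ b)`. In
characteristic zero, differentiating minimal polynomials shows that the elements algebraic over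
this field are stable under `D`, so every `Dᵏ b` is among them. The same argument applies over
`L(S)` for a `D`-stable set `S` and bounds the rank over `L` in terms of that of `S`. Finally, the
relation satisfied by `b` has finitely many coefficients, which lie in `L(T)` for finitely many
adjoined elements `T`; the union `S` of the orbits of `T` under `D` is `D`-stable of finite rank.
-/

open IntermediateField Polynomial

section Derivation

variable {F K : Type*} [Field F] [Field K] [Algebra F K] (D : Derivation ℤ K K)
  {C : IntermediateField F K}

-- The difference is the value at `x` of `p` with `D` applied to its coefficients.
lemma derivation_aeval_sub_mem (hF : ∀ r : F, D (algebraMap F K r) ∈ C) {x : K} (hx : x ∈ C)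
    (p : F[X]) : D (aeval x p) - aeval x (derivative p) * D x ∈ C := by
  induction p using Polynomial.induction_on' with
  | add p q hp hq =>
    convert add_mem hp hq using 1
    simp only [map_add]
    ring
  | monomial n r =>
    convert mul_mem (pow_mem hx n) (hF r) using 1
    simp only [aeval_monomial, derivative_monomial, Derivation.leibniz, Derivation.leibniz_pow,
      smul_eq_mul, map_mul, map_natCast, nsmul_eq_mul]
    ring

lemma derivation_mem_of_isSeparable (hF : ∀ r : F, D (algebraMap F K r) ∈ C) {x : K}
    (hx : x ∈ C) (hsep : IsSeparable F x) : D x ∈ C := by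
  have hne : aeval x (derivative (minpoly F x)) ≠ 0 :=
    hsep.aeval_derivative_ne_zero (minpoly.aeval F x)
  have hmul : aeval x (derivative (minpoly F x)) * D x ∈ C := by
    simpa [minpoly.aeval] using derivation_aeval_sub_mem D hF hx (minpoly F x)
  have haeval : aeval x (derivative (minpoly F x)) ∈ C :=
    C.aeval_coe ⟨x, hx⟩ (derivative (minpoly F x)) ▸ SetLike.coe_mem _
  simpa [hne] using mul_mem (inv_mem haeval) hmul

lemma derivation_mem_of_mem_adjoin (hF : ∀ r : F, D (algebraMap F K r) ∈ C) {S : Set K}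
    (hSC : S ⊆ C) (hS : Set.MapsTo D S C) {x : K} (hx : x ∈ adjoin F S) : D x ∈ C := by
  have hle : adjoin F S ≤ C := adjoin_le_iff.2 hSC
  induction hx using adjoin_induction with
  | mem x hx => exact hS hx
  | algebraMap r => exact hF r
  | add x y _ _ hx hy => simpa only [map_add] using add_mem hx hy
  | inv x hxS hx =>
    rw [Derivation.leibniz_inv]
    exact mul_mem (neg_mem (pow_mem (inv_mem (hle hxS)) 2)) hx
  | mul x y hxS hyS hx hy =>
    rw [Derivation.leibniz]
    exact add_mem (mul_mem (hle hxS) hy) (mul_mem (hle hyS) hx)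

end Derivation

section RelAlgClosure

variable {F K : Type*} [Field F] [Field K] [Algebra F K] {S T : Set K} {x : K}

/-- The elements of `K` that are algebraic over `F(S)`. It is the closure of `S` in the matroid of
algebraic independence over `F`, taken as a subfield so that derivations can be applied to it. -/
noncomputable def relAlgClosure (F : Type*) {K : Type*} [Field F] [Field K] [Algebra F K]
    (S : Set K) : IntermediateField F K :=
  (algebraicClosure (adjoin F S) K).restrictScalars F

lemma mem_relAlgClosure_iff : x ∈ relAlgClosure F S ↔ IsAlgebraic (adjoin F S) x :=
  mem_algebraicClosure_iff

lemma coe_relAlgClosure :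
    (relAlgClosure F S : Set K) = (AlgebraicIndependent.matroid F K).closure S := by
  ext x
  rw [AlgebraicIndependent.matroid_closure_eq, SetLike.mem_coe, mem_relAlgClosure_iff,
    isAlgebraic_adjoin_iff]
  rfl

lemma adjoin_le_relAlgClosure : adjoin F S ≤ relAlgClosure F S := fun x hx =>
  mem_relAlgClosure_iff.2 (isAlgebraic_algebraMap (⟨x, hx⟩ : adjoin F S))

lemma subset_relAlgClosure : S ⊆ relAlgClosure F S :=
  (subset_adjoin F S).trans adjoin_le_relAlgClosure

lemma mem_relAlgClosure_union_of_isAlgebraic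
    (hx : IsAlgebraic (Algebra.adjoin (adjoin F S) T) x) : x ∈ relAlgClosure F (S ∪ T) := by
  rw [← isAlgebraic_adjoin_iff] at hx
  change IsAlgebraic ((adjoin (adjoin F S) T).restrictScalars F) x at hx
  rwa [adjoin_adjoin_left, ← mem_relAlgClosure_iff] at hx

lemma mapsTo_relAlgClosure [CharZero K] {D : Derivation ℤ K K}
    (hF : ∀ r : F, D (algebraMap F K r) ∈ relAlgClosure F S)
    (hS : Set.MapsTo D S (relAlgClosure F S)) :
    Set.MapsTo D (relAlgClosure F S) (relAlgClosure F S) := by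
  intro x hx
  have : CharZero F := (algebraMap F K).charZero
  have hadjoin : ∀ r : adjoin F S, D r ∈ algebraicClosure (adjoin F S) K := fun r =>
    derivation_mem_of_mem_adjoin D hF subset_relAlgClosure hS r.2
  exact derivation_mem_of_isSeparable D hadjoin hx
    (minpoly.irreducible (mem_relAlgClosure_iff.1 hx).isIntegral).separable

end RelAlgClosure

section AlgebraicIndependence

variable {R A : Type*} [CommRing R] [CommRing A] [Algebra R A] {f : ℕ → A}

lemma algebraicIndependent_of_forall_algebraicIndepOn_Iio
    (h : ∀ n, AlgebraicIndepOn R f (Set.Iio n)) : AlgebraicIndependent R f := by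
  refine algebraicIndependent_of_finite_type fun t ht => ?_
  obtain ⟨n, hn⟩ := ht.bddAbove
  exact (h (n + 1)).mono fun i hi => Nat.lt_succ_of_le (hn hi)

lemma algebraicIndependent_iff_forall_fin :
    AlgebraicIndependent R f ↔ ∀ n, AlgebraicIndependent R fun i : Fin (n + 1) => f i := by
  refine ⟨fun h n => h.comp _ Fin.val_injective, fun h => ?_⟩
  refine algebraicIndependent_of_forall_algebraicIndepOn_Iio fun n => ?_
  exact (h n).comp (fun i : Set.Iio n => ⟨i, Nat.lt_succ_of_lt i.2⟩) fun i j hij =>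
    Subtype.ext (Fin.ext_iff.1 hij)

lemma exists_isAlgebraic_adjoin_image_Iio_of_not_algebraicIndependent
    (hinj : Function.Injective (algebraMap R A)) (h : ¬ AlgebraicIndependent R f) :
    ∃ n, IsAlgebraic (Algebra.adjoin R (f '' Set.Iio n)) (f n) := by
  by_contra! htrans
  refine h (algebraicIndependent_of_forall_algebraicIndepOn_Iio fun n => ?_)
  induction n with
  | zero =>
    have : IsEmpty (Set.Iio 0 : Set ℕ) := by simp
    exact algebraicIndependent_empty_type_iff.2 hinj
  | succ n ih =>
    have hIio : Set.Iio (n + 1) = insert n (Set.Iio n) := by ext; simp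
    exact hIio ▸ ih.insert (htrans n)

end AlgebraicIndependence

lemma coeffs_subset_iff_forall_coeff_mem {σ R B : Type*} [CommSemiring R] [SetLike B R]
    [ZeroMemClass B R] {M : B} {P : MvPolynomial σ R} :
    (P.coeffs : Set R) ⊆ M ↔ ∀ m, P.coeff m ∈ M := by
  refine ⟨fun h m => ?_, fun h c hc => ?_⟩
  · by_cases hm : P.coeff m = 0
    · exact hm ▸ zero_mem M
    · exact h (MvPolynomial.coeff_mem_coeffs m hm)
  · obtain ⟨m, -, rfl⟩ := MvPolynomial.mem_coeffs_iff.1 hc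
    exact h m

lemma exists_finset_subset_adjoin {F E : Type*} [Field F] [Field E] [Algebra F E] {S : Set E}
    {C : Finset E} (hC : (C : Set E) ⊆ adjoin F S) :
    ∃ T : Finset E, (T : Set E) ⊆ S ∧ (C : Set E) ⊆ adjoin F (T : Set E) := by
  classical
  choose! T hTS hT using fun c (hc : c ∈ C) => exists_finset_of_mem_adjoin (hC hc)
  refine ⟨C.biUnion T, by simpa using hTS, fun c hc => ?_⟩
  exact adjoin.mono F _ _ (mod_cast Finset.subset_biUnion_of_mem T hc) (hT c hc)

lemma exists_derivation_coe_eq {R : Type*} [CommRing R] {D : R → R}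
    (hadd : ∀ x y, D (x + y) = D x + D y) (hmul : ∀ x y, D (x * y) = x * D y + y * D x) :
    ∃ D' : Derivation ℤ R R, ⇑D' = D :=
  ⟨Derivation.mk' (AddMonoidHom.mk' D hadd).toIntLinearMap hmul, rfl⟩

/-- The orbit `{b, D b, D² b, …}` of `b` under `D`, as a set, so that its
rank in the matroid of algebraic independence can be taken. -/
def derivOrbit {K : Type*} (D : K → K) (b : K) : Set K :=
  Set.range fun k : ℕ => D^[k] b

section DerivOrbit

variable {K : Type*} {D : K → K} {b : K}

lemma mem_derivOrbit_self : b ∈ derivOrbit D b :=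
  ⟨0, rfl⟩

lemma mapsTo_derivOrbit : Set.MapsTo D (derivOrbit D b) (derivOrbit D b) := by
  rintro _ ⟨k, rfl⟩
  exact ⟨k + 1, Function.iterate_succ_apply' D k b⟩

lemma derivOrbit_subset {S : Set K} (hS : Set.MapsTo D S S) (hb : b ∈ S) : derivOrbit D b ⊆ S :=
  Set.range_subset_iff.2 fun k => hS.iterate k hb

end DerivOrbit

section DifferentiallyAlgebraic

variable {K : Type*} [Field K] {L : Subfield K} {b : K}

section Map

variable {D : K → K}

lemma IsDifferentiallyAlgebraic.mono {M : Subfield K} (hLM : L ≤ M)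
    (hb : IsDifferentiallyAlgebraic D L b) : IsDifferentiallyAlgebraic D M b := by
  obtain ⟨n, P, hP, hcoeff, heval⟩ := hb
  exact ⟨n, P, hP, fun m => hLM (hcoeff m), heval⟩

lemma IsDifferentiallyAlgebraic.exists_finset_adjoin {A : Set K}
    (hb : IsDifferentiallyAlgebraic D (adjoin L A).toSubfield b) :
    ∃ T : Finset K, (T : Set K) ⊆ A ∧
      IsDifferentiallyAlgebraic D (adjoin L (T : Set K)).toSubfield b := by
  obtain ⟨n, P, hP, hcoeff, heval⟩ := hb
  obtain ⟨T, hTA, hT⟩ :=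
    exists_finset_subset_adjoin (coeffs_subset_iff_forall_coeff_mem.2 hcoeff)
  exact ⟨T, hTA, n, P, hP, coeffs_subset_iff_forall_coeff_mem.1 hT, heval⟩

lemma isDifferentiallyAlgebraic_iff_exists_not_algebraicIndependent_fin :
    IsDifferentiallyAlgebraic D L b ↔
      ∃ n, ¬ AlgebraicIndependent L fun i : Fin (n + 1) => D^[i] b := by
  refine exists_congr fun n => ?_
  rw [algebraicIndependent_iff]
  push Not
  constructor
  · rintro ⟨P, hP, hcoeff, heval⟩
    have hrange : P ∈ Set.range (MvPolynomial.map (algebraMap L K)) := by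
      rw [MvPolynomial.mem_range_map_iff_coeffs_subset]
      exact Subtype.range_coe.symm ▸ coeffs_subset_iff_forall_coeff_mem.2 hcoeff
    obtain ⟨Q, rfl⟩ := hrange
    refine ⟨Q, by rwa [MvPolynomial.aeval_def, ← MvPolynomial.eval_map], ?_⟩
    rintro rfl
    exact hP (map_zero _)
  · rintro ⟨Q, heval, hQ⟩
    refine ⟨MvPolynomial.map (algebraMap L K) Q, ?_, fun m => ?_, ?_⟩
    · rwa [Ne, map_eq_zero_iff _ (MvPolynomial.map_injective _ (algebraMap L K).injective)]
    · exact MvPolynomial.coeff_map (algebraMap L K) Q m ▸ (Q.coeff m).2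
    · rwa [MvPolynomial.eval_map, ← MvPolynomial.aeval_def]

lemma isDifferentiallyAlgebraic_iff_not_algebraicIndependent :
    IsDifferentiallyAlgebraic D L b ↔ ¬ AlgebraicIndependent L fun k : ℕ => D^[k] b := by
  rw [isDifferentiallyAlgebraic_iff_exists_not_algebraicIndependent_fin,
    algebraicIndependent_iff_forall_fin, not_forall]

lemma IsDifferentiallyAlgebraic.of_isRkFinite
    (hb : (AlgebraicIndependent.matroid L K).IsRkFinite (derivOrbit D b)) :
    IsDifferentiallyAlgebraic D L b := by
  rw [isDifferentiallyAlgebraic_iff_not_algebraicIndependent]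
  intro hindep
  have hfinite : (derivOrbit D b).Finite :=
    hb.finite_of_indep_subset hindep.to_subtype_range subset_rfl
  exact Set.infinite_range_of_injective hindep.injective hfinite

end Map

variable [CharZero K] {D : Derivation ℤ K K}

lemma IsDifferentiallyAlgebraic.exists_derivOrbit_subset {S : Set K}
    (hL : Set.MapsTo D L L) (hS : Set.MapsTo D S S)
    (hb : IsDifferentiallyAlgebraic D (adjoin L S).toSubfield b) :
    ∃ T : Set K, T.Finite ∧ derivOrbit D b ⊆ relAlgClosure L (S ∪ T) := by
  obtain ⟨n, hn⟩ := exists_isAlgebraic_adjoin_image_Iio_of_not_algebraicIndependent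
    (algebraMap (adjoin L S).toSubfield K).injective
    (isDifferentiallyAlgebraic_iff_not_algebraicIndependent.1 hb)
  set T : Set K := (fun k : ℕ => D^[k] b) '' Set.Iio n
  have hgen : S ∪ T ⊆ relAlgClosure L (S ∪ T) := subset_relAlgClosure
  have hle : ∀ k ≤ n, D^[k] b ∈ relAlgClosure L (S ∪ T) := by
    intro k hk
    obtain hlt | rfl := hk.lt_or_eq
    · exact hgen (Or.inr ⟨k, hlt, rfl⟩)
    · exact mem_relAlgClosure_union_of_isAlgebraic hn
  have hmaps : Set.MapsTo D (S ∪ T) (relAlgClosure L (S ∪ T)) := by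
    rintro _ (hs | ⟨k, hk, rfl⟩)
    · exact hgen (Or.inl (hS hs))
    · exact Function.iterate_succ_apply' D k b ▸ hle (k + 1) hk
  have hbase : ∀ r : L, D (algebraMap L K r) ∈ relAlgClosure L (S ∪ T) := fun r =>
    IntermediateField.algebraMap_mem _ (⟨D r, hL r.2⟩ : L)
  exact ⟨T, (Set.finite_Iio n).image _,
    derivOrbit_subset (mapsTo_relAlgClosure hbase hmaps) (hle 0 n.zero_le)⟩

lemma IsDifferentiallyAlgebraic.isRkFinite_of_adjoin {S : Set K}
    (hL : Set.MapsTo D L L) (hS : Set.MapsTo D S S)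
    (hfin : (AlgebraicIndependent.matroid L K).IsRkFinite S)
    (hb : IsDifferentiallyAlgebraic D (adjoin L S).toSubfield b) :
    (AlgebraicIndependent.matroid L K).IsRkFinite (derivOrbit D b) := by
  obtain ⟨T, hT, hsub⟩ := hb.exists_derivOrbit_subset hL hS
  rw [coe_relAlgClosure] at hsub
  exact ((hfin.union (Matroid.isRkFinite_of_finite _ hT)).closure).subset hsub

lemma isDifferentiallyAlgebraic_iff_isRkFinite (hL : Set.MapsTo D L L) :
    IsDifferentiallyAlgebraic D L b ↔
      (AlgebraicIndependent.matroid L K).IsRkFinite (derivOrbit D b) := by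
  refine ⟨fun hb => ?_, .of_isRkFinite⟩
  refine (hb.mono ?_).isRkFinite_of_adjoin hL (Set.mapsTo_empty D ∅) (Matroid.IsRkFinite.empty _)
  exact fun x hx => IntermediateField.algebraMap_mem _ (⟨x, hx⟩ : L)

lemma IsDifferentiallyAlgebraic.iterate (hL : Set.MapsTo D L L)
    (hb : IsDifferentiallyAlgebraic D L b) (k : ℕ) : IsDifferentiallyAlgebraic D L (D^[k] b) := by
  rw [isDifferentiallyAlgebraic_iff_isRkFinite hL] at hb ⊢
  exact hb.subset (derivOrbit_subset mapsTo_derivOrbit ⟨k, rfl⟩)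

lemma IsDifferentiallyAlgebraic.of_adjoin {A : Set K} (hL : Set.MapsTo D L L)
    (hA : ∀ a ∈ A, IsDifferentiallyAlgebraic D L a)
    (hb : IsDifferentiallyAlgebraic D (adjoin L A).toSubfield b) :
    IsDifferentiallyAlgebraic D L b := by
  obtain ⟨T, hTA, hbT⟩ := hb.exists_finset_adjoin
  set S : Set K := ⋃ a : T, derivOrbit D (a : K)
  have hTS : (T : Set K) ⊆ S := fun a ha => Set.mem_iUnion.2 ⟨⟨a, ha⟩, mem_derivOrbit_self⟩
  have hS : Set.MapsTo D S S := Set.mapsTo_iUnion_iUnion fun _ => mapsTo_derivOrbit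
  have hfin : (AlgebraicIndependent.matroid L K).IsRkFinite S :=
    Matroid.IsRkFinite.iUnion fun a =>
      (isDifferentiallyAlgebraic_iff_isRkFinite hL).1 (hA a (hTA a.2))
  exact .of_isRkFinite ((hbT.mono (adjoin.mono L _ _ hTS)).isRkFinite_of_adjoin hL hS hfin)

end DifferentiallyAlgebraic

theorem diffAlgebraic_trans_of_finitely_generated_general {K : Type*} [Field K] [CharZero K]
    (D : K → K)
    (hD_add : ∀ x y : K, D (x + y) = D x + D y)
    (hD_mul : ∀ x y : K, D (x * y) = x * D y + y * D x)
    (L : Subfield K) (hL : ∀ x ∈ L, D x ∈ L)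
    {ι : Type*} (a : ι → K) (b : K)
    (ha : ∀ i, IsDifferentiallyAlgebraic D L (a i))
    (hb : IsDifferentiallyAlgebraic D
      (Subfield.closure ((L : Set K) ∪ {x | ∃ (k : ℕ) (i : ι), x = D^[k] (a i)})) b) :
    IsDifferentiallyAlgebraic D L b := by
  obtain ⟨D, rfl⟩ := exists_derivation_coe_eq hD_add hD_mul
  refine IsDifferentiallyAlgebraic.of_adjoin
    (A := {x | ∃ (k : ℕ) (i : ι), x = D^[k] (a i)}) hL ?_ ?_
  · rintro _ ⟨k, i, rfl⟩
    exact (ha i).iterate hL k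
  · rw [adjoin_toSubfield]
    convert hb
    exact Subtype.range_coe

/-- If `a₁, …, aₙ` are differentially algebraic over `L` and `b` is differentially
algebraic over the differential subfield `L⟨a₁, …, aₙ⟩` (generated by `L` together with
all derivatives `Dᵏaᵢ`), then `b` is differentially algebraic over `L`. -/
theorem diffAlgebraic_trans_of_finitely_generated {K : Type*} [Field K] [CharZero K]
    (D : K → K)
    (hD_add : ∀ x y : K, D (x + y) = D x + D y)
    (hD_mul : ∀ x y : K, D (x * y) = x * D y + y * D x)
    (L : Subfield K) (hL : ∀ x ∈ L, D x ∈ L)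
    (n : ℕ) (a : Fin n → K) (b : K)
    (ha : ∀ i, IsDifferentiallyAlgebraic D L (a i))
    (hb : IsDifferentiallyAlgebraic D
      (Subfield.closure ((L : Set K) ∪ {x | ∃ (k : ℕ) (i : Fin n), x = D^[k] (a i)})) b) :
    IsDifferentiallyAlgebraic D L b :=
  diffAlgebraic_trans_of_finitely_generated_general D hD_add hD_mul L hL a b ha hb
end

section
/- The real Gamma function Γ : ℝ → ℝ is not differentially algebraic over the field ℝ(x) of real rational functions: there do not exist n ∈ ℕ and a nonzero polynomial P ∈ ℝ[X₀, X₁, …, X_{n+1}] such that P(x, Γ(x), Γ′(x), …, Γ⁽ⁿ⁾(x)) = 0 for all real x > 0. -/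
/-!
Let `σ` be the operator on differential polynomials `P(x, y, y', …)` induced by
`y(x + 1) = x y(x)`, that is, `x ↦ x + 1` and `y⁽ᵏ⁾ ↦ x y⁽ᵏ⁾ + k y⁽ᵏ⁻¹⁾`. It preserves the ideal of
relations satisfied by `Γ` near `+∞`, and for the lexicographic order ranking higher derivatives
first it preserves the leading monomial. Let `P` be a nonzero relation whose leading monomial is
minimal and whose leading coefficient, a polynomial in `x`, has minimal degree. Dividing leading
coefficients gives `σ P = R(x) P`, where the degree of `R` in `x` is the total degree `d` of the
leading monomial of `P`. If `d = 0`, then `P` is a polynomial in `x` alone and cannot vanish near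
`+∞`. Otherwise `R` has a root `γ`. If `γ ≠ 0`, the substitution `σ` is invertible at `x = γ`, so
`P` vanishes identically at `x = γ + 1` and is divisible by the minimal polynomial of `γ + 1`. If
`γ = 0`, then `P` vanishes at `y = 0` for `x = 1`, hence for `x = 2, 3, …`, hence for all `x`, so
`P` is divisible by `y`. As `Γ` has no zeros near `+∞`, in both cases the quotient is a smaller
relation.
-/

namespace HolderGamma

open Filter MvPolynomial OrderDual Topology

open scoped ContDiff MonomialOrder Polynomial

section TriangularSubstitution

variable {σ R S : Type*} [CommSemiring R] [CommSemiring S] [IsReduced S] {m : MonomialOrder σ}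
  {g : σ → MvPolynomial σ S}

lemma sum_degree_pow_eq (hg : ∀ i, m.degree (g i) = Finsupp.single i 1) (a : σ →₀ ℕ) :
    ∑ i ∈ a.support, m.degree (g i ^ a i) = a := by
  simp only [m.degree_pow, hg, Finsupp.smul_single, smul_eq_mul, mul_one]
  exact a.sum_single

lemma degree_prod_pow_le (hg : ∀ i, m.degree (g i) = Finsupp.single i 1) (a : σ →₀ ℕ) :
    m.degree (∏ i ∈ a.support, g i ^ a i) ≼[m] a := by
  simpa only [sum_degree_pow_eq hg] using
    m.degree_prod_le (P := fun i => g i ^ a i) (s := a.support)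

lemma coeff_prod_pow (hg : ∀ i, m.degree (g i) = Finsupp.single i 1) (a : σ →₀ ℕ) :
    coeff a (∏ i ∈ a.support, g i ^ a i) = ∏ i ∈ a.support, m.leadingCoeff (g i) ^ a i := by
  simpa only [sum_degree_pow_eq hg, m.leadingCoeff_pow] using
    m.coeff_prod_sum_degree (fun i => g i ^ a i) a.support

lemma degree_eval₂_le (f : R →+* S) (hg : ∀ i, m.degree (g i) = Finsupp.single i 1)
    (P : MvPolynomial σ R) : m.degree (eval₂ (C.comp f) g P) ≼[m] m.degree P := by
  rw [eval₂_eq]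
  refine m.degree_sum_le.trans (Finset.sup_le fun a ha => ?_)
  calc m.toSyn (m.degree (C (f (P.coeff a)) * ∏ i ∈ a.support, g i ^ a i))
      ≤ m.toSyn (m.degree (∏ i ∈ a.support, g i ^ a i)) := by
        rw [← smul_eq_C_mul]
        exact m.degree_smul_le
    _ ≤ m.toSyn a := degree_prod_pow_le hg a
    _ ≤ m.toSyn (m.degree P) := m.le_degree ha

lemma coeff_degree_eval₂ (f : R →+* S) (hg : ∀ i, m.degree (g i) = Finsupp.single i 1)
    (P : MvPolynomial σ R) :
    coeff (m.degree P) (eval₂ (C.comp f) g P) =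
      f (m.leadingCoeff P) *
        ∏ i ∈ (m.degree P).support, m.leadingCoeff (g i) ^ m.degree P i := by
  simp only [eval₂_eq, coeff_sum, RingHom.comp_apply, coeff_C_mul]
  rw [Finset.sum_eq_single (m.degree P), coeff_prod_pow hg, MonomialOrder.leadingCoeff]
  · intro a ha hne
    have hlt : a ≺[m] m.degree P :=
      lt_of_le_of_ne (m.le_degree ha) (m.toSyn.injective.ne hne)
    rw [m.coeff_eq_zero_of_lt ((degree_prod_pow_le hg a).trans_lt hlt), mul_zero]
  · intro h
    rw [notMem_support_iff.1 h, map_zero, zero_mul]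

end TriangularSubstitution

section Rank

variable {σ K : Type*} [Field K] (m : MonomialOrder σ)

/-- The rank of a polynomial over `K[X]`: its leading monomial, then the degree of its leading
coefficient. It measures progress in the descent on relations. -/
noncomputable def rank (P : MvPolynomial σ K[X]) : m.syn ×ₗ ℕ :=
  toLex (m.toSyn (m.degree P), (m.leadingCoeff P).natDegree)

variable {m} {P Q : MvPolynomial σ K[X]}

lemma rank_lt_rank_C_mul {p : K[X]} (hp : p.natDegree ≠ 0) (hP : P ≠ 0) :
    rank m P < rank m (C p * P) := by
  have hp0 : p ≠ 0 := Polynomial.ne_zero_of_natDegree_gt (Nat.pos_of_ne_zero hp)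
  refine Prod.Lex.toLex_lt_toLex.2 (Or.inr ⟨?_, ?_⟩)
  · rw [m.degree_mul (C_ne_zero.2 hp0) hP, m.degree_C, zero_add]
  · rw [m.leadingCoeff_mul, m.leadingCoeff_C,
      Polynomial.natDegree_mul hp0 (m.leadingCoeff_ne_zero_iff.2 hP)]
    omega

lemma rank_lt_rank_X_mul (i : σ) (hP : P ≠ 0) : rank m P < rank m (X i * P) := by
  refine Prod.Lex.toLex_lt_toLex.2 (Or.inl ?_)
  rw [m.degree_mul (X_ne_zero i) hP, m.degree_X, map_add]
  refine lt_add_of_pos_left _ ?_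
  rw [m.toSyn_lt_iff_ne_zero]
  simp

lemma exists_eq_C_mul_or_rank_sub_lt (hP : P ≠ 0) (hQ : m.degree Q ≼[m] m.degree P) :
    ∃ r : K[X], Q = C r * P ∨ rank m (Q - C r * P) < rank m P := by
  set q := coeff (m.degree P) Q
  set p := m.leadingCoeff P with hp
  have hp0 : p ≠ 0 := m.leadingCoeff_ne_zero_iff.2 hP
  refine ⟨q / p, or_iff_not_imp_left.2 fun hne => ?_⟩
  have hle : m.degree (Q - C (q / p) * P) ≼[m] m.degree P := by
    refine m.degree_sub_le.trans (sup_le hQ ?_)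
    rw [← smul_eq_C_mul]
    exact m.degree_smul_le
  refine Prod.Lex.toLex_lt_toLex.2 (hle.lt_or_eq.imp_right fun heq => ⟨heq, ?_⟩)
  have hmod : m.leadingCoeff (Q - C (q / p) * P) = q % p := by
    rw [MonomialOrder.leadingCoeff, m.toSyn.injective heq, coeff_sub, coeff_C_mul,
      EuclideanDomain.mod_eq_sub_mul_div, mul_comm p, hp, MonomialOrder.leadingCoeff]
  have hmod0 : q % p ≠ 0 := hmod ▸ m.leadingCoeff_ne_zero_iff.2 (sub_ne_zero.2 hne)
  rw [hmod]
  exact Polynomial.natDegree_lt_natDegree hmod0 (EuclideanDomain.mod_lt q hp0)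

end Rank

lemma X_dvd_of_forall_eval_eq_zero {σ R : Type*} [CommRing R] [IsDomain R] [Infinite R] {i : σ}
    {P : MvPolynomial σ R} (h : ∀ z : σ → R, z i = 0 → eval z P = 0) : X i ∣ P := by
  classical
  set Q := P.modMonomial (Finsupp.single i 1)
  have hPQ : X i * P.divMonomial (Finsupp.single i 1) + Q = P :=
    P.divMonomial_add_modMonomial_single i
  have hi : i ∉ Q.vars := by
    rw [mem_vars_iff_mem_support]
    rintro ⟨a, ha, hai⟩
    refine mem_support_iff.1 ha (coeff_modMonomial_of_le P ?_)
    simpa [Nat.one_le_iff_ne_zero] using hai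
  rw [X_dvd_iff_modMonomial_eq_zero]
  refine MvPolynomial.funext fun z => ?_
  calc eval z Q = eval (Function.update z i 0) Q :=
        eval₂Hom_congr' rfl
          (fun j hj _ => (Function.update_of_ne (ne_of_mem_of_not_mem hj hi) _ _).symm) rfl
    _ = eval (Function.update z i 0) P := by
        rw [← hPQ, map_add, map_mul, eval_X, Function.update_self, zero_mul, zero_add]
    _ = eval z 0 := by rw [h _ (Function.update_self ..), map_zero]

/-- Differential polynomials in one indeterminate `y` with coefficients in `K[x]`. The variable
`X (toDual k)` stands for the `k`-th derivative of `y`; indices are dualized so that the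
lexicographic monomial order ranks higher derivatives first. -/
abbrev DiffPoly (K : Type*) [CommSemiring K] := MvPolynomial ℕᵒᵈ K[X]

namespace DiffPoly

section Eval

variable {K L : Type*} [CommSemiring K] [CommSemiring L] [Algebra K L]

/-- Evaluation of a differential polynomial at a point `x` and a sequence `y` of values for the
indeterminate and its derivatives. -/
noncomputable def evalJet (x : L) (y : ℕ → L) : DiffPoly K →+* L :=
  eval₂Hom (Polynomial.aeval x : K[X] →ₐ[K] L).toRingHom (y ∘ ofDual)

@[simp]
lemma evalJet_C (x : L) (y : ℕ → L) (p : K[X]) : evalJet x y (C p) = Polynomial.aeval x p := by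
  simp [evalJet]

@[simp]
lemma evalJet_X (x : L) (y : ℕ → L) (k : ℕᵒᵈ) : evalJet (K := K) x y (X k) = y (ofDual k) := by
  simp [evalJet]

lemma aeval_eval (x : L) (z : ℕᵒᵈ → K[X]) (P : DiffPoly K) :
    Polynomial.aeval x (eval z P) = evalJet x (fun k => Polynomial.aeval x (z (toDual k))) P :=
  eval₂_comp_left (Polynomial.aeval x : K[X] →ₐ[K] L).toRingHom _ _ P

/-- The jet of a solution of `y(x + 1) = x y(x)` at `x + 1`, in terms of its jet at `x`. At `k = 0`
the factor `k` removes the term with the truncated index `k - 1`. -/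
def shiftJet (x : L) (y : ℕ → L) (k : ℕ) : L := x * y k + k * y (k - 1)

variable (K) in
/-- The image of the `k`-th derivative of `y` under the substitution `y(x + 1) = x y(x)`. -/
noncomputable def shiftVar (k : ℕᵒᵈ) : DiffPoly K :=
  C Polynomial.X * X k + C ((ofDual k : ℕ) : K[X]) * X (toDual (ofDual k - 1))

/-- The operator on differential polynomials induced by the functional equation
`y(x + 1) = x y(x)`. -/
noncomputable def shift : DiffPoly K →+* DiffPoly K :=
  eval₂Hom (C.comp (Polynomial.compRingHom (Polynomial.X + 1))) (shiftVar K)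

lemma evalJet_shift (x : L) (y : ℕ → L) (P : DiffPoly K) :
    evalJet x y (shift P) = evalJet (x + 1) (shiftJet x y) P := by
  suffices (evalJet x y).comp shift = evalJet (K := K) (x + 1) (shiftJet x y) from
    RingHom.congr_fun this P
  apply MvPolynomial.ringHom_ext
  · intro p
    simp [shift, Polynomial.aeval_comp]
  · intro k
    simp [shift, shiftVar, shiftJet]

lemma evalJet_add_one_shiftJet {P : DiffPoly K} {r : K[X]} (h : shift P = C r * P)
    (x : L) (y : ℕ → L) :
    evalJet (x + 1) (shiftJet x y) P = Polynomial.aeval x r * evalJet x y P := by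
  rw [← evalJet_shift, h, map_mul, evalJet_C]

end Eval

section ShiftJetSurjective

variable {L : Type*} [Field L]

lemma exists_shiftJet_eq {x : L} (hx : x ≠ 0) (z : ℕ → L) : ∃ y, shiftJet x y = z := by
  refine ⟨fun k => Nat.rec (z 0 / x) (fun k yk => (z (k + 1) - (k + 1) * yk) / x) k, ?_⟩
  funext k
  cases k with
  | zero => simp [shiftJet, mul_div_cancel₀ _ hx]
  | succ k => simp [shiftJet, mul_div_cancel₀ _ hx]

lemma exists_shiftJet_zero_eq [CharZero L] {z : ℕ → L} (hz : z 0 = 0) :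
    ∃ y, shiftJet 0 y = z := by
  refine ⟨fun k => z (k + 1) / (k + 1), ?_⟩
  funext k
  cases k with
  | zero => simp [shiftJet, hz]
  | succ k => simp [shiftJet, mul_div_cancel₀ _ (Nat.cast_add_one_ne_zero (R := L) k)]

end ShiftJetSurjective

section LeadingTerm

open MonomialOrder

section Nontrivial

variable {K : Type*} [CommSemiring K] [Nontrivial K]

lemma degree_C_X_mul_X (k : ℕᵒᵈ) :
    lex.degree (C Polynomial.X * X k : DiffPoly K) = Finsupp.single k 1 := by
  classical
  rw [C_mul_X_eq_monomial, degree_monomial, if_neg Polynomial.X_ne_zero]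

lemma degree_cast_mul_X_pred_lt (k : ℕᵒᵈ) :
    lex.degree (C ((ofDual k : ℕ) : K[X]) * X (toDual (ofDual k - 1)) : DiffPoly K) ≺[lex]
      lex.degree (C Polynomial.X * X k : DiffPoly K) := by
  rw [degree_C_X_mul_X]
  obtain hk | hk := Nat.eq_zero_or_pos (ofDual k)
  · rw [hk, Nat.cast_zero, map_zero, zero_mul, degree_zero, map_zero, toSyn_lt_iff_ne_zero]
    simp
  · rw [← smul_eq_C_mul]
    refine degree_smul_le.trans_lt (degree_X_le_single.trans_lt ?_)
    rw [lex_lt_iff, Finsupp.Lex.single_lt_iff, ← ofDual_lt_ofDual]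
    exact Nat.pred_lt hk.ne'

lemma degree_shiftVar (k : ℕᵒᵈ) : lex.degree (shiftVar K k) = Finsupp.single k 1 :=
  (degree_add_of_lt (degree_cast_mul_X_pred_lt k)).trans (degree_C_X_mul_X k)

lemma leadingCoeff_shiftVar (k : ℕᵒᵈ) : lex.leadingCoeff (shiftVar K k) = Polynomial.X := by
  rw [shiftVar, leadingCoeff_add_of_lt (degree_cast_mul_X_pred_lt k), C_mul_X_eq_monomial,
    leadingCoeff_monomial]

variable [NoZeroDivisors K]

lemma degree_shift_le (P : DiffPoly K) : lex.degree (shift P) ≼[lex] lex.degree P :=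
  degree_eval₂_le _ degree_shiftVar P

lemma coeff_degree_shift (P : DiffPoly K) :
    coeff (lex.degree P) (shift P) =
      (lex.leadingCoeff P).comp (Polynomial.X + 1) * Polynomial.X ^ (lex.degree P).degree := by
  refine (coeff_degree_eval₂ _ degree_shiftVar P).trans ?_
  simp only [leadingCoeff_shiftVar, Finset.prod_pow_eq_pow_sum]
  rfl

end Nontrivial

lemma natDegree_of_shift_eq_C_mul {K : Type*} [CommRing K] [IsDomain K] {P : DiffPoly K}
    (hP : P ≠ 0) {r : K[X]} (h : shift P = C r * P) : r.natDegree = (lex.degree P).degree := by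
  have hlead : r * lex.leadingCoeff P =
      (lex.leadingCoeff P).comp (Polynomial.X + 1) * Polynomial.X ^ (lex.degree P).degree := by
    rw [← coeff_degree_shift, h, coeff_C_mul, MonomialOrder.leadingCoeff]
  have hp0 : lex.leadingCoeff P ≠ 0 := lex.leadingCoeff_ne_zero_iff.2 hP
  have hcomp0 : (lex.leadingCoeff P).comp (Polynomial.X + 1) ≠ 0 := by
    rwa [← Polynomial.C_1, Ne, Polynomial.comp_X_add_C_eq_zero_iff]
  have hr0 : r ≠ 0 := by
    rintro rfl
    rw [zero_mul] at hlead
    exact mul_ne_zero hcomp0 (pow_ne_zero _ Polynomial.X_ne_zero) hlead.symm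
  have hdeg := congrArg Polynomial.natDegree hlead
  rw [Polynomial.natDegree_mul hr0 hp0,
    Polynomial.natDegree_mul hcomp0 (pow_ne_zero _ Polynomial.X_ne_zero),
    Polynomial.natDegree_comp, ← Polynomial.C_1, Polynomial.natDegree_X_add_C, mul_one,
    Polynomial.natDegree_X_pow] at hdeg
  omega

end LeadingTerm

section ShiftEigenvector

variable {K L : Type*} [Field K] [Field L] [Algebra K L] {P : DiffPoly K} {r : K[X]}

lemma C_minpoly_dvd_of_forall_evalJet_eq_zero [Infinite L] {x : L}
    (h : ∀ y : ℕ → L, evalJet x y P = 0) : C (minpoly K x) ∣ P := by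
  have hmap : map (Polynomial.aeval x : K[X] →ₐ[K] L).toRingHom P = 0 := by
    refine MvPolynomial.funext fun z => ?_
    rw [eval_map, map_zero]
    exact h (z ∘ toDual)
  refine C_dvd_iff_dvd_coeff _ _ |>.2 fun a => minpoly.dvd K x ?_
  exact (coeff_map _ P a).symm.trans (congrArg (coeff a) hmap)

lemma C_minpoly_dvd_of_shift_eq_C_mul [Infinite L] (h : shift P = C r * P) {γ : L} (hγ0 : γ ≠ 0)
    (hγ : Polynomial.aeval γ r = 0) : C (minpoly K (γ + 1)) ∣ P := by
  refine C_minpoly_dvd_of_forall_evalJet_eq_zero fun z => ?_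
  obtain ⟨y, rfl⟩ := exists_shiftJet_eq hγ0 z
  rw [evalJet_add_one_shiftJet h, hγ, zero_mul]

variable [CharZero K]

lemma evalJet_natCast_add_one_eq_zero (h : shift P = C r * P) (hr : r.eval 0 = 0) (n : ℕ)
    {z : ℕ → K} (hz : z 0 = 0) : evalJet (n + 1 : K) z P = 0 := by
  induction n generalizing z with
  | zero =>
    obtain ⟨y, rfl⟩ := exists_shiftJet_zero_eq hz
    rw [Nat.cast_zero, evalJet_add_one_shiftJet h, Polynomial.coe_aeval_eq_eval, hr, zero_mul]
  | succ n ih =>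
    have hn : (n + 1 : K) ≠ 0 := n.cast_add_one_ne_zero
    obtain ⟨y, rfl⟩ := exists_shiftJet_eq hn z
    have hy : y 0 = 0 := by simpa [shiftJet, hn] using hz
    rw [Nat.cast_add_one, evalJet_add_one_shiftJet h, ih hy, mul_zero]

lemma X_zero_dvd_of_shift_eq_C_mul (h : shift P = C r * P) (hr : r.eval 0 = 0) :
    X (toDual 0) ∣ P := by
  refine X_dvd_of_forall_eval_eq_zero fun z hz => ?_
  have hroot (n : ℕ) : (eval z P).IsRoot (n + 1 : K) := by
    rw [Polynomial.IsRoot, ← Polynomial.coe_aeval_eq_eval, aeval_eval]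
    exact evalJet_natCast_add_one_eq_zero h hr n (by rw [hz, map_zero])
  have hinj : Function.Injective fun n : ℕ => (n + 1 : K) :=
    (add_left_injective 1).comp Nat.cast_injective
  exact Polynomial.eq_zero_of_infinite_isRoot _
    ((Set.infinite_range_of_injective hinj).mono (Set.range_subset_iff.2 hroot))

lemma exists_irreducible_C_dvd_or_X_zero_dvd (h : shift P = C r * P) (hr : r.natDegree ≠ 0) :
    (∃ p : K[X], Irreducible p ∧ C p ∣ P) ∨ X (toDual 0) ∣ P := by
  obtain ⟨γ, hγ⟩ := IsAlgClosed.exists_aeval_eq_zero (AlgebraicClosure K) r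
    fun hdeg => hr (Polynomial.natDegree_eq_of_degree_eq_some hdeg)
  obtain rfl | hγ0 := eq_or_ne γ 0
  · refine Or.inr (X_zero_dvd_of_shift_eq_C_mul h ?_)
    rw [← map_zero (algebraMap K (AlgebraicClosure K)), Polynomial.aeval_algebraMap_apply] at hγ
    exact FaithfulSMul.algebraMap_injective K _ hγ
  · exact Or.inl ⟨_, minpoly.irreducible (Algebra.IsIntegral.isIntegral (γ + 1)),
      C_minpoly_dvd_of_shift_eq_C_mul h hγ0 hγ⟩

theorem eq_bot_of_shift_mem {I : Ideal (DiffPoly K)} (htop : I ≠ ⊤)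
    (hshift : ∀ P ∈ I, shift P ∈ I) (hC : ∀ p ≠ 0, ∀ P, C p * P ∈ I → P ∈ I)
    (hX : ∀ P, X (toDual 0) * P ∈ I → P ∈ I) : I = ⊥ := by
  refine (Submodule.eq_bot_iff I).2 fun P hPI => ?_
  induction hrank : rank MonomialOrder.lex P using WellFoundedLT.induction generalizing P with
  | ind _ ih =>
  subst hrank
  by_contra hP
  obtain ⟨r, hr⟩ : ∃ r : K[X], shift P = C r * P := by
    obtain ⟨r, hr | hlt⟩ := exists_eq_C_mul_or_rank_sub_lt hP (degree_shift_le P)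
    · exact ⟨r, hr⟩
    · exact ⟨r, sub_eq_zero.1
        (ih _ hlt _ (I.sub_mem (hshift P hPI) (I.mul_mem_left _ hPI)) rfl)⟩
  have hr0 : r.natDegree ≠ 0 := by
    rw [natDegree_of_shift_eq_C_mul hP hr, Ne, Finsupp.degree_eq_zero_iff]
    intro hdeg
    rw [MonomialOrder.eq_C_of_degree_eq_zero hdeg] at hPI
    refine htop (I.eq_top_iff_one.2 (hC _ (MonomialOrder.lex.leadingCoeff_ne_zero_iff.2 hP) 1 ?_))
    rwa [mul_one]
  obtain ⟨p, hp, Q, rfl⟩ | ⟨Q, rfl⟩ := exists_irreducible_C_dvd_or_X_zero_dvd hr hr0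
  · have hQ : Q ≠ 0 := right_ne_zero_of_mul hP
    exact hQ (ih _ (rank_lt_rank_C_mul hp.natDegree_pos.ne' hQ) Q (hC p hp.ne_zero Q hPI) rfl)
  · have hQ : Q ≠ 0 := right_ne_zero_of_mul hP
    exact hQ (ih _ (rank_lt_rank_X_mul _ hQ) Q (hX Q hPI) rfl)

end ShiftEigenvector

section OfMvPolynomial

variable {K : Type*} [CommSemiring K] (n : ℕ)

/-- The variables of a polynomial `P(x, y, y', …, y⁽ⁿ⁻¹⁾)`, with `none` for `x` and `some k` for the
`k`-th derivative of `y`. -/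
def jetIndex : Fin (n + 1) → Option ℕᵒᵈ :=
  Fin.cons none fun k => some (toDual k.val)

lemma jetIndex_injective : Function.Injective (jetIndex n) :=
  Fin.cons_injective_iff.2 ⟨by simp, fun i j h => Fin.ext (by simpa using h)⟩

/-- A polynomial `P(x, y, y', …, y⁽ⁿ⁻¹⁾)` as a differential polynomial. -/
noncomputable def ofMvPolynomial : MvPolynomial (Fin (n + 1)) K →ₐ[K] DiffPoly K :=
  (optionEquivRight K ℕᵒᵈ).toAlgHom.comp (rename (jetIndex n))

lemma ofMvPolynomial_injective : Function.Injective (ofMvPolynomial (K := K) n) :=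
  (optionEquivRight K ℕᵒᵈ).injective.comp (rename_injective _ (jetIndex_injective n))

variable {n}

lemma evalJet_ofMvPolynomial (x : K) (y : ℕ → K) (P : MvPolynomial (Fin (n + 1)) K) :
    evalJet x y (ofMvPolynomial n P) = eval (Fin.cons x fun k : Fin n => y k) P := by
  suffices (evalJet x y).comp (ofMvPolynomial n).toRingHom =
      eval (Fin.cons x fun k : Fin n => y k) from RingHom.congr_fun this P
  apply MvPolynomial.ringHom_ext
  · intro a
    simp [ofMvPolynomial]
  · intro i
    cases i using Fin.cases <;> simp [ofMvPolynomial, jetIndex]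

end OfMvPolynomial

end DiffPoly

lemma iteratedDeriv_id_mul {𝕜 : Type*} [NontriviallyNormedField 𝕜] {f : 𝕜 → 𝕜} {x : 𝕜} {k : ℕ}
    (hf : ContDiffAt 𝕜 k f x) :
    iteratedDeriv k (fun t => t * f t) x =
      x * iteratedDeriv k f x + k * iteratedDeriv (k - 1) f x := by
  rw [iteratedDeriv_fun_mul (f := fun t => t) contDiffAt_id hf]
  simp only [iteratedDeriv_fun_id]
  rcases k with _ | k
  · simp
  · rw [Finset.sum_range_succ', Finset.sum_range_succ', Finset.sum_eq_zero fun _ _ => by simp]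
    simp [add_comm]

lemma iteratedDeriv_add_one_of_eventually {𝕜 : Type*} [NontriviallyNormedField 𝕜] {f : 𝕜 → 𝕜}
    {x : 𝕜} (hf : ContDiffAt 𝕜 ∞ f x) (hshift : ∀ᶠ t in 𝓝 x, f (t + 1) = t * f t) (k : ℕ) :
    iteratedDeriv k f (x + 1) = DiffPoly.shiftJet x (fun j => iteratedDeriv j f x) k := by
  rw [DiffPoly.shiftJet, ← iteratedDeriv_id_mul (hf.of_le (mod_cast le_top)),
    ← EventuallyEq.iteratedDeriv_eq k hshift, iteratedDeriv_comp_add_const]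

lemma eventually_atTop_eventually_nhds {α : Type*} [TopologicalSpace α] [LinearOrder α]
    [ClosedIicTopology α] [Nonempty α] [NoMaxOrder α] {p : α → Prop} (h : ∀ᶠ x in atTop, p x) :
    ∀ᶠ x in atTop, ∀ᶠ t in 𝓝 x, p t := by
  obtain ⟨a, ha⟩ := eventually_atTop.1 h
  filter_upwards [eventually_gt_atTop a] with x hx
  filter_upwards [Ioi_mem_nhds hx] with t ht using ha t (le_of_lt ht)

section EventualRelations

/-- The ideal of differential polynomials `P` with `P(x, f(x), f'(x), …) = 0` for all large `x`. -/
noncomputable def eventualRelations (f : ℝ → ℝ) : Ideal (DiffPoly ℝ) where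
  carrier := {P | ∀ᶠ x in atTop, DiffPoly.evalJet x (fun k => iteratedDeriv k f x) P = 0}
  zero_mem' := by simp
  add_mem' hP hQ := by
    filter_upwards [hP, hQ] with x hPx hQx
    rw [map_add, hPx, hQx, add_zero]
  smul_mem' Q P hP := by
    filter_upwards [hP] with x hPx
    rw [smul_eq_mul, map_mul, hPx, mul_zero]

variable {f : ℝ → ℝ}

lemma mem_eventualRelations {P : DiffPoly ℝ} :
    P ∈ eventualRelations f ↔
      ∀ᶠ x in atTop, DiffPoly.evalJet x (fun k => iteratedDeriv k f x) P = 0 :=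
  Iff.rfl

lemma eventualRelations_ne_top : eventualRelations f ≠ ⊤ := by
  rw [Ideal.ne_top_iff_one, mem_eventualRelations]
  simp only [map_one, one_ne_zero, eventually_const, not_false_iff]

lemma mem_eventualRelations_of_mul_mem {P Q : DiffPoly ℝ}
    (hP : ∀ᶠ x in atTop, DiffPoly.evalJet x (fun k => iteratedDeriv k f x) P ≠ 0)
    (h : P * Q ∈ eventualRelations f) : Q ∈ eventualRelations f := by
  filter_upwards [hP, h] with x hPx hx
  exact (mul_eq_zero.1 (map_mul (DiffPoly.evalJet x _) P Q ▸ hx)).resolve_left hPx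

lemma shift_mem_eventualRelations (hf : ∀ᶠ x in atTop, ContDiffAt ℝ ∞ f x)
    (hshift : ∀ᶠ x in atTop, f (x + 1) = x * f x) {P : DiffPoly ℝ}
    (hP : P ∈ eventualRelations f) : DiffPoly.shift P ∈ eventualRelations f := by
  filter_upwards [hf, eventually_atTop_eventually_nhds hshift,
    (tendsto_atTop_add_const_right atTop 1 tendsto_id).eventually hP] with x hfx hshiftx hPx
  rwa [DiffPoly.evalJet_shift, ← funext (iteratedDeriv_add_one_of_eventually hfx hshiftx)]

theorem eventualRelations_eq_bot (hf : ∀ᶠ x in atTop, ContDiffAt ℝ ∞ f x)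
    (hshift : ∀ᶠ x in atTop, f (x + 1) = x * f x) (hne : ∀ᶠ x in atTop, f x ≠ 0) :
    eventualRelations f = ⊥ := by
  refine DiffPoly.eq_bot_of_shift_mem eventualRelations_ne_top
    (fun P => shift_mem_eventualRelations hf hshift)
    (fun p hp P => mem_eventualRelations_of_mul_mem ?_)
    (fun P => mem_eventualRelations_of_mul_mem ?_)
  · simpa using p.eventually_atTop_not_isRoot hp
  · simpa using hne

end EventualRelations

lemma contDiffAt_realGamma {x : ℝ} (hx : ∀ m : ℕ, x ≠ -m) {n : WithTop ℕ∞} :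
    ContDiffAt ℝ n Real.Gamma x := by
  have hx' (m : ℕ) : (x : ℂ) ≠ -m := mod_cast hx m
  have hinv : AnalyticAt ℂ (fun s => (Complex.Gamma s)⁻¹) x :=
    Complex.differentiable_one_div_Gamma.analyticAt _
  have hGamma : AnalyticAt ℂ Complex.Gamma x := by
    simpa only [Pi.inv_def, inv_inv] using hinv.inv (inv_ne_zero (Complex.Gamma_ne_zero hx'))
  exact hGamma.contDiffAt.real_of_complex

end HolderGamma

open Filter HolderGamma

open scoped ContDiff

theorem realGamma_not_diffAlgebraic_general {f : ℝ → ℝ} (hf : ∀ᶠ x in atTop, ContDiffAt ℝ ∞ f x)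
    (hshift : ∀ᶠ x in atTop, f (x + 1) = x * f x) (hne : ∀ᶠ x in atTop, f x ≠ 0) :
    ¬ ∃ (n : ℕ) (P : MvPolynomial (Fin (n + 2)) ℝ),
      P ≠ 0 ∧ ∀ᶠ x in atTop,
        MvPolynomial.eval
          (fun i : Fin (n + 2) =>
            if i.val = 0 then x else iteratedDeriv (i.val - 1) f x) P = 0 := by
  rintro ⟨n, P, hP, hrel⟩
  have hmem : DiffPoly.ofMvPolynomial (n + 1) P ∈ eventualRelations f := by
    filter_upwards [hrel] with x hx
    rw [DiffPoly.evalJet_ofMvPolynomial, ← hx]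
    congr 2
    funext i
    cases i using Fin.cases <;> simp
  rw [eventualRelations_eq_bot hf hshift hne, Ideal.mem_bot] at hmem
  exact hP ((map_eq_zero_iff _ (DiffPoly.ofMvPolynomial_injective _)).1 hmem)

/-- The real Gamma function is not differentially algebraic over `ℝ(x)`: there are no
`n ∈ ℕ` and nonzero polynomial `P ∈ ℝ[X₀, …, X_{n+1}]` with
`P (x, Γ x, Γ' x, …, Γ⁽ⁿ⁾ x) = 0` for all real `x > 0`. -/
theorem realGamma_not_diffAlgebraic :
    ¬ ∃ (n : ℕ) (P : MvPolynomial (Fin (n + 2)) ℝ),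
      P ≠ 0 ∧ ∀ x : ℝ, 0 < x →
        MvPolynomial.eval
          (fun i : Fin (n + 2) =>
            if i.val = 0 then x else iteratedDeriv (i.val - 1) Real.Gamma x) P = 0 := by
  rintro ⟨n, P, hP, hrel⟩
  have hpos : ∀ᶠ x : ℝ in atTop, 0 < x := eventually_gt_atTop 0
  exact realGamma_not_diffAlgebraic_general
    (hpos.mono fun x hx =>
      contDiffAt_realGamma fun m => ((neg_nonpos.2 m.cast_nonneg).trans_lt hx).ne')
    (hpos.mono fun x hx => Real.Gamma_add_one hx.ne')
    (hpos.mono fun x hx => (Real.Gamma_pos_of_pos hx).ne') ⟨n, P, hP, hpos.mono hrel⟩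
end

section
/- The complex Gamma function Γ : ℂ → ℂ is differentially transcendental: there do not exist n ∈ ℕ and a nonzero polynomial P ∈ ℂ[X₀, X₁, …, X_{n+1}] such that P(z, Γ(z), Γ′(z), …, Γ⁽ⁿ⁾(z)) = 0 for every z ∈ ℂ at which Γ is analytic (i.e., every z that is not a nonpositive integer). -/
/-!
Put `y = Γ` and let `Yₖ` stand for its `k`-th derivative. Differentiating `y (z + 1) = z * y z`
shows that `z ↦ z + 1` acts on differential polynomials over `K[z]` by the ring endomorphism
`Yₖ ↦ z Yₖ + k Yₖ₋₁`, combined with the shift of the coefficients. The differential polynomials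
annihilating `y` form a prime ideal stable under this shift, which contains neither `Y₀` nor a
nonzero element of `K[z]`.

Such an ideal is zero. Otherwise, order its nonzero elements by leading monomial and then by the
degree of the leading coefficient, and take a minimal one `P`; primality makes `P` irreducible.
The shift preserves leading monomials, so dividing leading coefficients shows that the shift of
`P` is `q P` for some `q` in `K[z]`. If `q γ = 0` with `γ ≠ 0`, specializing at `z = γ` gives
`z - (γ + 1) ∣ P`. If `q 0 = 0`, specializing at `z = 0` shows that `P` with `Y₀ = 0` vanishes at
`z = 1`, and the shift propagates this zero to its leading coefficient at `z = 2, 3, …`, so that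
`Y₀ ∣ P`. Both contradict irreducibility. Hence `q` is constant; but its degree is the total
degree of the leading monomial of `P`, so `P` lies in `K[z]`, which is absurd.
-/

namespace HolderGamma

open MvPolynomial
open scoped MonomialOrder Polynomial

section LeadingTerms

variable {σ R S : Type*} [CommSemiring R] [NoZeroDivisors R] [CommSemiring S]
  (m : MonomialOrder σ) {φ : S →+* R} {g : σ → MvPolynomial σ R}

theorem degree_prod_pow (hg : ∀ i, m.degree (g i) = Finsupp.single i 1) (β : σ →₀ ℕ) :
    m.degree (∏ i ∈ β.support, g i ^ β i) = β := by
  have g_ne_zero (i : σ) : g i ≠ 0 := m.ne_zero_of_degree_ne_zero (by simp [hg i])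
  rw [m.degree_prod fun i _ => pow_ne_zero _ (g_ne_zero i)]
  simp only [m.degree_pow, hg, Finsupp.smul_single, nsmul_one, Nat.cast_id]
  exact β.sum_single

theorem coeff_self_prod_pow (hg : ∀ i, m.degree (g i) = Finsupp.single i 1) (β : σ →₀ ℕ) :
    coeff β (∏ i ∈ β.support, g i ^ β i) = β.prod fun i k => m.leadingCoeff (g i) ^ k := by
  have h := m.coeff_prod_sum_degree (fun i => g i ^ β i) β.support
  simp only [m.degree_pow, m.leadingCoeff_pow, hg, Finsupp.smul_single, nsmul_one,
    Nat.cast_id] at h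
  rwa [show ∑ i ∈ β.support, Finsupp.single i (β i) = β from β.sum_single] at h

theorem coeff_eval₂_of_degree_le (hg : ∀ i, m.degree (g i) = Finsupp.single i 1)
    {P : MvPolynomial σ S} {γ : σ →₀ ℕ} (hγ : m.degree P ≼[m] γ) :
    coeff γ (eval₂ (C.comp φ) g P) =
      φ (coeff γ P) * γ.prod fun i k => m.leadingCoeff (g i) ^ k := by
  simp only [eval₂_eq, RingHom.comp_apply, coeff_sum, coeff_C_mul]
  rw [Finset.sum_eq_single γ, coeff_self_prod_pow m hg]
  · intro β hβ hne
    have hlt : β ≺[m] γ :=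
      ((m.le_degree hβ).trans hγ).lt_of_ne fun h => hne (m.toSyn.injective h)
    have hcoeff : coeff γ (∏ i ∈ β.support, g i ^ β i) = 0 :=
      m.coeff_eq_zero_of_lt (by rwa [degree_prod_pow m hg])
    rw [hcoeff, mul_zero]
  · intro hγP
    rw [notMem_support_iff.1 hγP, map_zero, zero_mul]

theorem coeff_degree_eval₂_ne_zero (hφ : Function.Injective φ)
    (hg : ∀ i, m.degree (g i) = Finsupp.single i 1) {P : MvPolynomial σ S} (hP : P ≠ 0) :
    coeff (m.degree P) (eval₂ (C.comp φ) g P) ≠ 0 := by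
  have : Nontrivial R :=
    ⟨φ (m.leadingCoeff P), 0, (map_ne_zero_iff φ hφ).2 (m.leadingCoeff_ne_zero_iff.2 hP)⟩
  have g_ne_zero (i : σ) : g i ≠ 0 := m.ne_zero_of_degree_ne_zero (by simp [hg i])
  rw [coeff_eval₂_of_degree_le m hg le_rfl]
  refine mul_ne_zero ((map_ne_zero_iff φ hφ).2 (m.leadingCoeff_ne_zero_iff.2 hP)) ?_
  exact Finset.prod_ne_zero_iff.2 fun i _ =>
    pow_ne_zero _ (m.leadingCoeff_ne_zero_iff.2 (g_ne_zero i))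

theorem degree_eval₂ (hφ : Function.Injective φ)
    (hg : ∀ i, m.degree (g i) = Finsupp.single i 1) (P : MvPolynomial σ S) :
    m.degree (eval₂ (C.comp φ) g P) = m.degree P := by
  rcases eq_or_ne P 0 with rfl | hP
  · rw [eval₂_zero, m.degree_zero, m.degree_zero]
  refine m.toSyn.injective (le_antisymm (m.degree_le_iff.2 fun γ hγ => ?_) (m.le_degree ?_))
  · by_contra! hlt
    rw [mem_support_iff, coeff_eval₂_of_degree_le m hg hlt.le, m.coeff_eq_zero_of_lt hlt,
      map_zero, zero_mul] at hγ
    exact hγ rfl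
  · exact mem_support_iff.2 (coeff_degree_eval₂_ne_zero m hφ hg hP)

theorem leadingCoeff_eval₂ (hφ : Function.Injective φ)
    (hg : ∀ i, m.degree (g i) = Finsupp.single i 1) (P : MvPolynomial σ S) :
    m.leadingCoeff (eval₂ (C.comp φ) g P) =
      φ (m.leadingCoeff P) * (m.degree P).prod fun i k => m.leadingCoeff (g i) ^ k := by
  rw [MonomialOrder.leadingCoeff, degree_eval₂ m hφ hg, coeff_eval₂_of_degree_le m hg le_rfl,
    MonomialOrder.leadingCoeff]

end LeadingTerms

section Complexity

variable {σ K : Type*} [Field K] (m : MonomialOrder σ)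

/-- The leading monomial, refined by the degree of its coefficient: the rank by which elements of
an ideal of `K[X][Yᵢ : i ∈ σ]` are compared. The degree takes values in `WithBot ℕ`, so that a
vanishing remainder ranks below every nonzero constant. -/
noncomputable def complexity (P : MvPolynomial σ K[X]) : m.syn ×ₗ WithBot ℕ :=
  toLex (m.toSyn (m.degree P), (m.leadingCoeff P).degree)

theorem complexity_lt_complexity_iff {P Q : MvPolynomial σ K[X]} :
    complexity m P < complexity m Q ↔ m.degree P ≺[m] m.degree Q ∨
      m.degree P = m.degree Q ∧ (m.leadingCoeff P).degree < (m.leadingCoeff Q).degree := by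
  rw [complexity, complexity, Prod.Lex.toLex_lt_toLex, m.toSyn.injective.eq_iff]

theorem complexity_lt_complexity_mul {F Q : MvPolynomial σ K[X]} (hF : F ≠ 0)
    (hF_unit : ¬ IsUnit F) (hQ : Q ≠ 0) : complexity m Q < complexity m (F * Q) := by
  rw [complexity_lt_complexity_iff, m.degree_mul hF hQ, m.leadingCoeff_mul]
  rcases eq_or_ne (m.degree F) 0 with hdeg | hdeg
  · have hlead_unit : ¬ IsUnit (m.leadingCoeff F) := fun h =>
      hF_unit (m.eq_C_of_degree_eq_zero hdeg ▸ h.map C)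
    have hlead_pos : 0 < (m.leadingCoeff F).degree :=
      Polynomial.degree_pos_of_ne_zero_of_nonunit (m.leadingCoeff_ne_zero_iff.2 hF) hlead_unit
    refine .inr ⟨by rw [hdeg, zero_add], ?_⟩
    refine Polynomial.degree_lt_degree ?_
    rw [Polynomial.natDegree_mul (m.leadingCoeff_ne_zero_iff.2 hF)
      (m.leadingCoeff_ne_zero_iff.2 hQ)]
    exact Nat.lt_add_of_pos_left (Polynomial.natDegree_pos_iff_degree_pos.2 hlead_pos)
  · left
    rw [map_add]
    exact lt_add_of_pos_left _ (m.toSyn_lt_iff_ne_zero.2 ((m.toSyn_eq_zero_iff _).not.2 hdeg))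

theorem complexity_sub_C_div_mul_lt {P Q : MvPolynomial σ K[X]} (hP : P ≠ 0)
    (hdeg : m.degree Q = m.degree P) :
    complexity m (Q - C (m.leadingCoeff Q / m.leadingCoeff P) * P) < complexity m P := by
  set q := m.leadingCoeff Q / m.leadingCoeff P with hq
  have hle : m.degree (Q - C q * P) ≼[m] m.degree P := by
    refine m.degree_sub_le.trans (sup_le (by rw [hdeg]) (m.degree_mul_le.trans ?_))
    rw [m.degree_C, zero_add]
  have hcoeff : coeff (m.degree P) (Q - C q * P) = m.leadingCoeff Q % m.leadingCoeff P := by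
    rw [EuclideanDomain.mod_eq_sub_mul_div, ← hq, coeff_sub, coeff_C_mul, mul_comm q,
      MonomialOrder.leadingCoeff, MonomialOrder.leadingCoeff, hdeg]
  rw [complexity_lt_complexity_iff]
  refine hle.lt_or_eq.imp_right fun heq => ?_
  replace heq := m.toSyn.injective heq
  refine ⟨heq, ?_⟩
  rw [MonomialOrder.leadingCoeff, heq, hcoeff]
  exact EuclideanDomain.mod_lt _ (m.leadingCoeff_ne_zero_iff.2 hP)

theorem irreducible_of_minimalFor_complexity {I : Ideal (MvPolynomial σ K[X])} [I.IsPrime]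
    {P : MvPolynomial σ K[X]} (hP : MinimalFor (fun Q => Q ∈ I ∧ Q ≠ 0) (complexity m) P) :
    Irreducible P := by
  have notMem_of_factor {F Q : MvPolynomial σ K[X]} (hPFQ : P = F * Q) (hF : ¬ IsUnit F) :
      Q ∉ I := by
    intro hQ
    obtain ⟨hF0, hQ0⟩ := ne_zero_and_ne_zero_of_mul (hPFQ ▸ hP.prop.2)
    exact hP.not_lt ⟨hQ, hQ0⟩ (hPFQ ▸ complexity_lt_complexity_mul m hF0 hF hQ0)
  refine ⟨fun hunit => Ideal.IsPrime.ne_top ‹_› (I.eq_top_of_isUnit_mem hP.prop.1 hunit), ?_⟩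
  intro F Q hPFQ
  by_contra! ⟨hF, hQ⟩
  rcases Ideal.IsPrime.mem_or_mem ‹_› (hPFQ ▸ hP.prop.1) with hFI | hQI
  · exact notMem_of_factor (hPFQ.trans (mul_comm F Q)) hQ hFI
  · exact notMem_of_factor hPFQ hF hQI

end Complexity

theorem isUnit_of_dvd_of_notMem {R : Type*} [CommSemiring R] {I : Ideal R} {P D : R}
    (hP : Irreducible P) (hPI : P ∈ I) (hDP : D ∣ P) (hDI : D ∉ I) : IsUnit D :=
  (hP.dvd_iff.1 hDP).resolve_right fun h => hDI (I.mem_of_dvd h.dvd hPI)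

section TriangularSubstitution

/-- The lexicographic order on monomials in `Y₀, Y₁, …` for which `Y₀ < Y₁ < ⋯`. Mathlib's
`MonomialOrder.lex` makes small indices dominant, so it is transported from `ℕᵒᵈ`. -/
noncomputable def ascendingLex : MonomialOrder ℕ where
  syn := (MonomialOrder.lex (σ := ℕᵒᵈ)).syn
  addCommMonoidSyn := MonomialOrder.lex.addCommMonoidSyn
  linearOrderSyn := MonomialOrder.lex.linearOrderSyn
  toSyn := (Finsupp.domCongr OrderDual.toDual).trans MonomialOrder.lex.toSyn
  toSyn_monotone _ _ h := Finsupp.toLex_monotone <|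
    Finsupp.le_def.2 fun k => Finsupp.le_def.1 h (OrderDual.ofDual k)

theorem single_ascendingLex_lt_single {j k : ℕ} (h : j < k) :
    Finsupp.single j 1 ≺[ascendingLex] Finsupp.single k 1 := by
  have toSyn_single (i : ℕ) : ascendingLex.toSyn (Finsupp.single i 1) =
      toLex (Finsupp.single (OrderDual.toDual i) 1) :=
    congrArg toLex (Finsupp.equivMapDomain_single OrderDual.toDual i 1)
  rw [toSyn_single, toSyn_single]
  exact Finsupp.Lex.single_lt_iff.2 (OrderDual.toDual_lt_toDual.2 h)

variable {R S : Type*} [CommSemiring R] [CommSemiring S]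

/-- The substitution `Yₖ ↦ c Yₖ + dₖ Yₖ₋₁`, acting on coefficients by `φ`. Since `0 - 1 = 0` in
`ℕ`, it is triangular only when `d 0 = 0`. -/
noncomputable def triangularSubst (φ : S →+* R) (c : R) (d : ℕ → R) :
    MvPolynomial ℕ S →+* MvPolynomial ℕ R :=
  eval₂Hom (C.comp φ) fun k => C c * X k + C (d k) * X (k - 1)

variable {φ : S →+* R} {c : R} {d : ℕ → R}

@[simp]
theorem triangularSubst_C (a : S) : triangularSubst φ c d (C a) = C (φ a) :=
  eval₂Hom_C _ _ _

@[simp]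
theorem triangularSubst_X (k : ℕ) :
    triangularSubst φ c d (X k) = C c * X k + C (d k) * X (k - 1) :=
  eval₂Hom_X' _ _ _

theorem map_triangularSubst {T : Type*} [CommSemiring T] (ψ : R →+* T) (P : MvPolynomial ℕ S) :
    map ψ (triangularSubst φ c d P) = triangularSubst (ψ.comp φ) (ψ c) (ψ ∘ d) P := by
  suffices (map ψ).comp (triangularSubst φ c d) = triangularSubst (ψ.comp φ) (ψ c) (ψ ∘ d) from
    congrArg (· P) this
  ext <;> simp

theorem triangularSubst_map {T : Type*} [CommSemiring T] (ψ : T →+* S) (P : MvPolynomial ℕ T) :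
    triangularSubst φ c d (map ψ P) = triangularSubst (φ.comp ψ) c d P :=
  eval₂Hom_map_hom _ _ _ _

theorem degree_C_mul_X (hc : c ≠ 0) (k : ℕ) :
    ascendingLex.degree (C c * X k : MvPolynomial ℕ R) = Finsupp.single k 1 := by
  classical
  rw [C_mul_X_eq_monomial, MonomialOrder.degree_monomial, if_neg hc]

theorem degree_C_mul_X_pred_lt (hc : c ≠ 0) {k : ℕ} (hk : k ≠ 0) (b : R) :
    ascendingLex.degree (C b * X (k - 1) : MvPolynomial ℕ R) ≺[ascendingLex]
      ascendingLex.degree (C c * X k : MvPolynomial ℕ R) := by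
  rw [degree_C_mul_X hc, C_mul_X_eq_monomial]
  exact (MonomialOrder.degree_monomial_le b).trans_lt
    (single_ascendingLex_lt_single (Nat.sub_one_lt hk))

theorem degree_C_mul_X_add_C_mul_X_pred (hc : c ≠ 0) (hd : d 0 = 0) (k : ℕ) :
    ascendingLex.degree (C c * X k + C (d k) * X (k - 1)) = Finsupp.single k 1 := by
  rcases eq_or_ne k 0 with rfl | hk
  · rw [hd, C_0, zero_mul, add_zero, degree_C_mul_X hc]
  · rw [MonomialOrder.degree_add_of_lt (degree_C_mul_X_pred_lt hc hk _), degree_C_mul_X hc]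

theorem leadingCoeff_C_mul_X_add_C_mul_X_pred (hc : c ≠ 0) (hd : d 0 = 0) (k : ℕ) :
    ascendingLex.leadingCoeff (C c * X k + C (d k) * X (k - 1)) = c := by
  have hlead : ascendingLex.leadingCoeff (C c * X k : MvPolynomial ℕ R) = c := by
    rw [C_mul_X_eq_monomial, MonomialOrder.leadingCoeff_monomial]
  rcases eq_or_ne k 0 with rfl | hk
  · rw [hd, C_0, zero_mul, add_zero, hlead]
  · rw [MonomialOrder.leadingCoeff_add_of_lt (degree_C_mul_X_pred_lt hc hk _), hlead]

variable [NoZeroDivisors R]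

theorem degree_triangularSubst (hφ : Function.Injective φ) (hc : c ≠ 0) (hd : d 0 = 0)
    (P : MvPolynomial ℕ S) :
    ascendingLex.degree (triangularSubst φ c d P) = ascendingLex.degree P :=
  degree_eval₂ ascendingLex hφ (degree_C_mul_X_add_C_mul_X_pred hc hd) P

theorem leadingCoeff_triangularSubst (hφ : Function.Injective φ) (hc : c ≠ 0) (hd : d 0 = 0)
    (P : MvPolynomial ℕ S) :
    ascendingLex.leadingCoeff (triangularSubst φ c d P) =
      φ (ascendingLex.leadingCoeff P) * c ^ (ascendingLex.degree P).degree := by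
  rw [triangularSubst, coe_eval₂Hom,
    leadingCoeff_eval₂ ascendingLex hφ (degree_C_mul_X_add_C_mul_X_pred hc hd)]
  simp only [leadingCoeff_C_mul_X_add_C_mul_X_pred hc hd, Finsupp.prod, Finset.prod_pow_eq_pow_sum,
    Finsupp.degree_apply]

theorem eq_zero_of_triangularSubst_eq_zero (hφ : Function.Injective φ) (hc : c ≠ 0)
    (hd : d 0 = 0) {P : MvPolynomial ℕ S} (h : triangularSubst φ c d P = 0) : P = 0 := by
  by_contra hP
  refine coeff_degree_eval₂_ne_zero ascendingLex hφ (degree_C_mul_X_add_C_mul_X_pred hc hd) hP ?_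
  rw [← coe_eval₂Hom, ← triangularSubst, h, coeff_zero]

end TriangularSubstitution

section SetVarZero

variable {σ R S : Type*} [CommRing R] [CommRing S] [DecidableEq σ]

/-- The substitution `Yᵢ ↦ 0` that fixes every other variable. -/
noncomputable def setVarZero (i : σ) : MvPolynomial σ R →ₐ[R] MvPolynomial σ R :=
  aeval (Function.update X i 0)

@[simp]
theorem setVarZero_X_self (i : σ) : setVarZero i (X i : MvPolynomial σ R) = 0 := by
  simp [setVarZero]

theorem setVarZero_X_of_ne {i j : σ} (h : j ≠ i) :
    setVarZero i (X j : MvPolynomial σ R) = X j := by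
  simp [setVarZero, h]

theorem X_dvd_sub_setVarZero (i : σ) (P : MvPolynomial σ R) : X i ∣ P - setVarZero i P := by
  induction P using MvPolynomial.induction_on with
  | C a => simp [setVarZero]
  | add P Q hP hQ => simpa only [map_add, add_sub_add_comm] using dvd_add hP hQ
  | mul_X P j hP =>
    have hsplit : P * X j - setVarZero i (P * X j) =
        (P - setVarZero i P) * X j + setVarZero i P * (X j - setVarZero i (X j)) := by
      rw [map_mul]; ring
    rw [hsplit]
    refine dvd_add (hP.mul_right _) (Dvd.dvd.mul_left ?_ _)
    rcases eq_or_ne j i with rfl | hj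
    · rw [setVarZero_X_self, sub_zero]
    · rw [setVarZero_X_of_ne hj, sub_self]; exact dvd_zero _

theorem X_dvd_of_setVarZero_eq_zero {i : σ} {P : MvPolynomial σ R} (h : setVarZero i P = 0) :
    X i ∣ P := by
  simpa only [h, sub_zero] using X_dvd_sub_setVarZero i P

theorem map_setVarZero (ψ : R →+* S) (i : σ) (P : MvPolynomial σ R) :
    map ψ (setVarZero i P) = setVarZero i (map ψ P) := by
  suffices (map ψ).comp (setVarZero i : _ →ₐ[R] _).toRingHom =
      (setVarZero i : _ →ₐ[S] _).toRingHom.comp (map ψ) from congrArg (· P) this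
  ext j : 2
  · simp
  · rcases eq_or_ne j i with rfl | hj
    · simp
    · simp [setVarZero_X_of_ne hj]

theorem setVarZero_triangularSubst {φ : S →+* R} {c : R} {d : ℕ → R} (hd : d 0 = 0)
    (P : MvPolynomial ℕ S) :
    setVarZero 0 (triangularSubst φ c d P) =
      triangularSubst φ c (Function.update d 1 0) (setVarZero 0 P) := by
  suffices (setVarZero 0 : _ →ₐ[R] _).toRingHom.comp (triangularSubst φ c d) =
      (triangularSubst φ c (Function.update d 1 0)).comp (setVarZero 0 : _ →ₐ[S] _).toRingHom from
    congrArg (· P) this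
  ext k : 2
  · simp
  · rcases k with _ | _ | k
    · simp [hd]
    · simp [setVarZero_X_of_ne]
    · simp [setVarZero_X_of_ne]

theorem setVarZero_eq_zero_of_triangularSubst_zero {K : Type*} [Field K] {d : ℕ → K}
    (hd : ∀ k, d k = 0 ↔ k = 0) {P : MvPolynomial ℕ K}
    (h : triangularSubst (RingHom.id K) 0 d P = 0) : setVarZero 0 P = 0 := by
  let raise : MvPolynomial ℕ K →ₐ[K] MvPolynomial ℕ K :=
    aeval fun k => C (d (k + 1))⁻¹ * X (k + 1)
  have raise_comp : raise.toRingHom.comp (triangularSubst (RingHom.id K) 0 d) =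
      (setVarZero 0 : _ →ₐ[K] _).toRingHom := by
    ext k : 2
    · simp
    · rcases k with _ | k
      · simp [(hd 0).2 rfl]
      · have hdk : d (k + 1) ≠ 0 := (hd _).not.2 k.succ_ne_zero
        simp [raise, setVarZero_X_of_ne, ← mul_assoc, ← C_mul, hdk]
  calc setVarZero 0 P = raise (triangularSubst (RingHom.id K) 0 d P) :=
        (congrArg (· P) raise_comp).symm
    _ = 0 := by rw [h, map_zero]

end SetVarZero

section GammaShift

variable {K : Type*} [Field K]

/-- The action of `z ↦ z + 1` on differential polynomials in a solution `y` of
`y (z + 1) = z * y z`: the coefficients are shifted and `Yₖ`, standing for the `k`-th derivative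
of `y`, goes to `z Yₖ + k Yₖ₋₁`. -/
noncomputable def gammaShift : MvPolynomial ℕ K[X] →+* MvPolynomial ℕ K[X] :=
  triangularSubst (Polynomial.taylorAlgHom (1 : K)).toRingHom Polynomial.X fun k => (k : K[X])

theorem degree_gammaShift (P : MvPolynomial ℕ K[X]) :
    ascendingLex.degree (gammaShift P) = ascendingLex.degree P :=
  degree_triangularSubst (Polynomial.taylor_injective 1) Polynomial.X_ne_zero Nat.cast_zero P

theorem leadingCoeff_gammaShift (P : MvPolynomial ℕ K[X]) :
    ascendingLex.leadingCoeff (gammaShift P) =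
      Polynomial.taylor 1 (ascendingLex.leadingCoeff P) *
        Polynomial.X ^ (ascendingLex.degree P).degree :=
  leadingCoeff_triangularSubst (Polynomial.taylor_injective 1) Polynomial.X_ne_zero
    Nat.cast_zero P

theorem map_eval_gammaShift (γ : K) (P : MvPolynomial ℕ K[X]) :
    map (Polynomial.evalRingHom γ) (gammaShift P) =
      triangularSubst (RingHom.id K) γ (fun k => (k : K))
        (map (Polynomial.evalRingHom (γ + 1)) P) := by
  have eval_comp_taylor : (Polynomial.evalRingHom γ).comp
      (Polynomial.taylorAlgHom (1 : K)).toRingHom = Polynomial.evalRingHom (γ + 1) :=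
    RingHom.ext fun a => Polynomial.taylor_eval 1 a γ
  rw [gammaShift, map_triangularSubst, triangularSubst_map, eval_comp_taylor]
  simp [Function.comp_def]

variable {P : MvPolynomial ℕ K[X]} {q : K[X]}

theorem exists_gammaShift_eq_C_mul_of_minimalFor {I : Ideal (MvPolynomial ℕ K[X])}
    (hshift : ∀ P ∈ I, gammaShift P ∈ I)
    (hmin : MinimalFor (fun Q => Q ∈ I ∧ Q ≠ 0) (complexity ascendingLex) P) :
    ∃ q, gammaShift P = C q * P := by
  obtain ⟨hPI, hP⟩ := hmin.prop
  refine ⟨ascendingLex.leadingCoeff (gammaShift P) / ascendingLex.leadingCoeff P, ?_⟩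
  by_contra hne
  exact hmin.not_lt ⟨I.sub_mem (hshift P hPI) (I.mul_mem_left _ hPI), sub_ne_zero.2 hne⟩
    (complexity_sub_C_div_mul_lt ascendingLex hP (degree_gammaShift P))

theorem natDegree_of_gammaShift_eq_C_mul (hP : P ≠ 0) (h : gammaShift P = C q * P) :
    q.natDegree = (ascendingLex.degree P).degree := by
  set a := ascendingLex.leadingCoeff P
  have ha : a ≠ 0 := ascendingLex.leadingCoeff_ne_zero_iff.2 hP
  have ha_shift : Polynomial.taylor 1 a ≠ 0 := (Polynomial.taylor_eq_zero 1 a).not.2 ha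
  have hlead : Polynomial.taylor 1 a * Polynomial.X ^ (ascendingLex.degree P).degree = q * a := by
    rw [← leadingCoeff_gammaShift, h, MonomialOrder.leadingCoeff_mul, MonomialOrder.leadingCoeff_C]
  have hq : q ≠ 0 := by
    rintro rfl
    exact mul_ne_zero ha_shift (pow_ne_zero _ Polynomial.X_ne_zero) (hlead.trans (zero_mul a))
  have hnat := congrArg Polynomial.natDegree hlead
  rw [Polynomial.natDegree_mul ha_shift (pow_ne_zero _ Polynomial.X_ne_zero),
    Polynomial.natDegree_taylor, Polynomial.natDegree_X_pow, Polynomial.natDegree_mul hq ha] at hnat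
  omega

theorem C_X_sub_C_dvd_of_gammaShift_eq_C_mul (h : gammaShift P = C q * P) {γ : K}
    (hγ : γ ≠ 0) (hq : q.IsRoot γ) : C (Polynomial.X - Polynomial.C (γ + 1)) ∣ P := by
  rw [C_dvd_iff_map_hom_eq_zero (Polynomial.evalRingHom (γ + 1)) _
    fun _ => Polynomial.dvd_iff_isRoot.symm]
  apply eq_zero_of_triangularSubst_eq_zero (φ := RingHom.id K) Function.injective_id hγ
    Nat.cast_zero
  rw [← map_eval_gammaShift, h, map_mul, map_C, Polynomial.coe_evalRingHom, hq.eq_zero, C_0,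
    zero_mul]

theorem leadingCoeff_setVarZero_of_gammaShift_eq_C_mul (h : gammaShift P = C q * P) :
    Polynomial.taylor 1 (ascendingLex.leadingCoeff (setVarZero 0 P)) *
        Polynomial.X ^ (ascendingLex.degree (setVarZero 0 P)).degree =
      q * ascendingLex.leadingCoeff (setVarZero 0 P) := by
  set P₀ := setVarZero 0 P with hP₀
  set d : ℕ → K[X] := Function.update (fun k => (k : K[X])) 1 0
  have hshift : triangularSubst (Polynomial.taylorAlgHom (1 : K)).toRingHom Polynomial.X d P₀ =
      C q * P₀ := by
    rw [hP₀, ← setVarZero_triangularSubst Nat.cast_zero, ← gammaShift, h, map_mul,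
      ← algebraMap_eq, AlgHom.commutes]
  have hlead := leadingCoeff_triangularSubst
    (φ := (Polynomial.taylorAlgHom (1 : K)).toRingHom) (Polynomial.taylor_injective 1)
    Polynomial.X_ne_zero (d := d) (by simp [d]) P₀
  rw [hshift, MonomialOrder.leadingCoeff_mul, MonomialOrder.leadingCoeff_C] at hlead
  exact hlead.symm

variable [CharZero K]

theorem eq_zero_of_taylor_one_mul_X_pow_eq_mul {a : K[X]} {e : ℕ}
    (h : Polynomial.taylor 1 a * Polynomial.X ^ e = q * a) (ha : a.IsRoot 1) : a = 0 := by
  have root_succ (n : ℕ) : a.IsRoot (n + 1 : K) := by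
    induction n with
    | zero => simpa using ha
    | succ n ih =>
      have heval := congrArg (Polynomial.eval (n + 1 : K)) h
      rw [Polynomial.eval_mul, Polynomial.eval_mul, ih.eq_zero, mul_zero, Polynomial.taylor_eval,
        Polynomial.eval_pow, Polynomial.eval_X] at heval
      rw [Nat.cast_succ]
      exact (mul_eq_zero.1 heval).resolve_right (pow_ne_zero e n.cast_add_one_ne_zero)
  have succ_injective : Function.Injective fun n : ℕ => (n + 1 : K) :=
    (add_left_injective 1).comp Nat.cast_injective
  exact a.eq_zero_of_infinite_isRoot
    ((Set.infinite_range_of_injective succ_injective).mono (Set.range_subset_iff.2 root_succ))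

theorem map_eval_one_setVarZero_of_gammaShift_eq_C_mul (h : gammaShift P = C q * P)
    (hq : q.IsRoot 0) : map (Polynomial.evalRingHom (1 : K)) (setVarZero 0 P) = 0 := by
  rw [map_setVarZero]
  apply setVarZero_eq_zero_of_triangularSubst_zero (d := fun k => (k : K))
    (fun _ => Nat.cast_eq_zero)
  rw [← zero_add (1 : K), ← map_eval_gammaShift, h, map_mul, map_C, Polynomial.coe_evalRingHom,
    hq.eq_zero, C_0, zero_mul]

theorem X_zero_dvd_of_gammaShift_eq_C_mul (h : gammaShift P = C q * P) (hq : q.IsRoot 0) :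
    X 0 ∣ P := by
  apply X_dvd_of_setVarZero_eq_zero
  have root_one : (ascendingLex.leadingCoeff (setVarZero 0 P)).IsRoot 1 := by
    simpa [coeff_map] using! congrArg (coeff (ascendingLex.degree (setVarZero 0 P)))
      (map_eval_one_setVarZero_of_gammaShift_eq_C_mul h hq)
  exact ascendingLex.leadingCoeff_eq_zero_iff.1
    (eq_zero_of_taylor_one_mul_X_pow_eq_mul (leadingCoeff_setVarZero_of_gammaShift_eq_C_mul h)
      root_one)

variable {I : Ideal (MvPolynomial ℕ K[X])}

theorem not_isRoot_of_gammaShift_eq_C_mul (hX : X 0 ∉ I) (hC : ∀ a : K[X], C a ∈ I → a = 0)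
    (hirr : Irreducible P) (hPI : P ∈ I) (h : gammaShift P = C q * P) (γ : K) :
    ¬ q.IsRoot γ := by
  intro hγ
  rcases eq_or_ne γ 0 with rfl | hγ0
  · exact (X_prime (R := K[X])).not_isUnit
      (isUnit_of_dvd_of_notMem hirr hPI (X_zero_dvd_of_gammaShift_eq_C_mul h hγ) hX)
  · have hlinear : C (Polynomial.X - Polynomial.C (γ + 1)) ∉ I := fun hmem =>
      Polynomial.X_sub_C_ne_zero _ (hC _ hmem)
    exact ((prime_C_iff ℕ).2 (Polynomial.prime_X_sub_C (γ + 1))).not_isUnit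
      (isUnit_of_dvd_of_notMem hirr hPI (C_X_sub_C_dvd_of_gammaShift_eq_C_mul h hγ0 hγ) hlinear)

theorem eq_bot_of_gammaShift_mem [IsAlgClosed K] [I.IsPrime]
    (hshift : ∀ P ∈ I, gammaShift P ∈ I) (hX : X 0 ∉ I) (hC : ∀ a : K[X], C a ∈ I → a = 0) :
    I = ⊥ := by
  by_contra hI
  obtain ⟨Q, hQ, hQ0⟩ := Submodule.exists_mem_ne_zero_of_ne_bot hI
  obtain ⟨P, hmin⟩ := exists_minimalFor_of_wellFoundedLT (fun Q => Q ∈ I ∧ Q ≠ 0)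
    (complexity ascendingLex) ⟨Q, hQ, hQ0⟩
  obtain ⟨hPI, hP⟩ := hmin.prop
  obtain ⟨q, hq⟩ := exists_gammaShift_eq_C_mul_of_minimalFor hshift hmin
  have hirr : Irreducible P := irreducible_of_minimalFor_complexity ascendingLex hmin
  have natDegree_eq_zero : q.natDegree = 0 := by
    by_contra hdeg
    obtain ⟨γ, hγ⟩ := IsAlgClosed.exists_root q fun h =>
      hdeg (Polynomial.natDegree_eq_of_degree_eq_some h)
    exact not_isRoot_of_gammaShift_eq_C_mul hX hC hirr hPI hq γ hγ
  have P_eq_C : P = C (ascendingLex.leadingCoeff P) := by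
    rw [natDegree_of_gammaShift_eq_C_mul hP hq, Finsupp.degree_eq_zero_iff] at natDegree_eq_zero
    exact ascendingLex.eq_C_of_degree_eq_zero natDegree_eq_zero
  exact ascendingLex.leadingCoeff_ne_zero_iff.2 hP (hC _ (P_eq_C ▸ hPI))

end GammaShift

theorem iteratedDeriv_fun_id_mul {𝕜 : Type*} [NontriviallyNormedField 𝕜] {f : 𝕜 → 𝕜} {z : 𝕜}
    {k : ℕ} (hf : ContDiffAt 𝕜 k f z) :
    iteratedDeriv k (fun w => w * f w) z =
      z * iteratedDeriv k f z + k * iteratedDeriv (k - 1) f z := by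
  rw [iteratedDeriv_fun_mul contDiffAt_fun_id hf]
  simp only [iteratedDeriv_fun_id]
  rcases k with _ | k
  · simp
  · rw [Finset.sum_range_succ', Finset.sum_range_succ']
    simp [add_comm]

section Jets

/-- The value at `z` of a differential polynomial in `f`: the coefficients are evaluated at `z` and
`Yₖ` becomes the `k`-th derivative of `f` at `z`. -/
noncomputable def evalJet (f : ℂ → ℂ) (z : ℂ) : MvPolynomial ℕ ℂ[X] →+* ℂ :=
  eval₂Hom (Polynomial.evalRingHom z) fun k => iteratedDeriv k f z

@[simp]
theorem evalJet_C (f : ℂ → ℂ) (z : ℂ) (a : ℂ[X]) : evalJet f z (C a) = a.eval z :=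
  eval₂Hom_C _ _ _

@[simp]
theorem evalJet_X (f : ℂ → ℂ) (z : ℂ) (k : ℕ) : evalJet f z (X k) = iteratedDeriv k f z :=
  eval₂Hom_X' _ _ _

/-- The embedding of `K[X₀, …, Xₙ]` into `K[X][Y₀, Y₁, …]` that turns `X₀` into the coefficient
variable and `Xₖ₊₁` into `Yₖ`. -/
noncomputable def toJetRing (K : Type*) [CommSemiring K] (n : ℕ) :
    MvPolynomial (Fin (n + 1)) K →ₐ[K] MvPolynomial ℕ K[X] :=
  (optionEquivRight K ℕ).toAlgHom.comp (rename fun i => (finSuccEquiv n i).map Fin.val)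

theorem toJetRing_injective (K : Type*) [CommSemiring K] (n : ℕ) :
    Function.Injective (toJetRing K n) :=
  (optionEquivRight K ℕ).injective.comp <| rename_injective _ <|
    (Option.map_injective Fin.val_injective).comp (finSuccEquiv n).injective

theorem evalJet_toJetRing (f : ℂ → ℂ) (z : ℂ) {n : ℕ} (P : MvPolynomial (Fin (n + 1)) ℂ) :
    evalJet f z (toJetRing ℂ n P) =
      eval (fun i => if i.val = 0 then z else iteratedDeriv (i.val - 1) f z) P := by
  suffices (evalJet f z).comp (toJetRing ℂ n).toRingHom =
      eval (fun i => if i.val = 0 then z else iteratedDeriv (i.val - 1) f z) from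
    congrArg (· P) this
  ext i
  · simp [toJetRing]
  · cases i using Fin.cases <;> simp [toJetRing]

variable {f : ℂ → ℂ} {U : Set ℂ}

theorem analyticOnNhd_evalJet (hf : AnalyticOnNhd ℂ f U) (P : MvPolynomial ℕ ℂ[X]) :
    AnalyticOnNhd ℂ (fun z => evalJet f z P) U := by
  induction P using MvPolynomial.induction_on with
  | C a =>
    simp only [evalJet_C]
    exact (AnalyticOnNhd.eval_polynomial a).mono (Set.subset_univ U)
  | add P Q hP hQ =>
    simp only [map_add]
    exact hP.add hQ
  | mul_X P k hP =>
    simp only [map_mul, evalJet_X, iteratedDeriv_eq_iterate]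
    exact hP.mul (hf.iterated_deriv k)

/-- The ideal of differential polynomials that vanish along `f` on all of `U`. -/
noncomputable def jetAnnihilator (f : ℂ → ℂ) (U : Set ℂ) : Ideal (MvPolynomial ℕ ℂ[X]) :=
  ⨅ z ∈ U, RingHom.ker (evalJet f z)

theorem mem_jetAnnihilator {P : MvPolynomial ℕ ℂ[X]} :
    P ∈ jetAnnihilator f U ↔ ∀ z ∈ U, evalJet f z P = 0 := by
  simp only [jetAnnihilator, Submodule.mem_iInf, RingHom.mem_ker]

theorem isPrime_jetAnnihilator (hU : IsPreconnected U) (hU_nonempty : U.Nonempty)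
    (hf : AnalyticOnNhd ℂ f U) : (jetAnnihilator f U).IsPrime := by
  refine ⟨(Ideal.ne_top_iff_one _).2 fun hone => ?_, fun {P Q} hPQ => ?_⟩
  · obtain ⟨z, hz⟩ := hU_nonempty
    exact one_ne_zero ((map_one (evalJet f z)).symm.trans (mem_jetAnnihilator.1 hone z hz))
  · simp only [mem_jetAnnihilator, map_mul] at hPQ ⊢
    exact (analyticOnNhd_evalJet hf P).eq_zero_or_eq_zero_of_mul_eq_zero
      (analyticOnNhd_evalJet hf Q) hPQ hU

theorem eq_zero_of_C_mem_jetAnnihilator (hU : IsOpen U) (hU_nonempty : U.Nonempty) {a : ℂ[X]}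
    (ha : C a ∈ jetAnnihilator f U) : a = 0 := by
  obtain ⟨z, hz⟩ := hU_nonempty
  refine a.eq_zero_of_infinite_isRoot ((infinite_of_mem_nhds z (hU.mem_nhds hz)).mono ?_)
  intro w hw
  exact (evalJet_C f w a).symm.trans (mem_jetAnnihilator.1 ha w hw)

theorem iteratedDeriv_add_one_of_add_one_eq_mul (hU : IsOpen U) (hf : AnalyticOnNhd ℂ f U)
    (hfeq : ∀ z ∈ U, f (z + 1) = z * f z) (k : ℕ) {z : ℂ} (hz : z ∈ U) :
    iteratedDeriv k f (z + 1) = z * iteratedDeriv k f z + k * iteratedDeriv (k - 1) f z := by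
  calc iteratedDeriv k f (z + 1) = iteratedDeriv k (fun w => f (w + 1)) z := by
        rw [iteratedDeriv_comp_add_const]
    _ = iteratedDeriv k (fun w => w * f w) z := Set.EqOn.iteratedDeriv_of_isOpen hfeq hU k hz
    _ = _ := iteratedDeriv_fun_id_mul (hf z hz).contDiffAt

theorem evalJet_gammaShift (hU : IsOpen U) (hf : AnalyticOnNhd ℂ f U)
    (hfeq : ∀ z ∈ U, f (z + 1) = z * f z) {z : ℂ} (hz : z ∈ U) (P : MvPolynomial ℕ ℂ[X]) :
    evalJet f z (gammaShift P) = evalJet f (z + 1) P := by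
  suffices (evalJet f z).comp gammaShift = evalJet f (z + 1) from congrArg (· P) this
  refine MvPolynomial.ringHom_ext (fun a => ?_) fun k => ?_
  · simp [gammaShift, Polynomial.taylor_eval]
  · simp [gammaShift, iteratedDeriv_add_one_of_add_one_eq_mul hU hf hfeq k hz]

theorem jetAnnihilator_eq_bot (hU : IsOpen U) (hU_conn : IsPreconnected U)
    (hU_add_one : ∀ z ∈ U, z + 1 ∈ U) (hf : AnalyticOnNhd ℂ f U)
    (hfeq : ∀ z ∈ U, f (z + 1) = z * f z) (hf_ne_zero : ∃ z ∈ U, f z ≠ 0) :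
    jetAnnihilator f U = ⊥ := by
  obtain ⟨z₀, hz₀, hfz₀⟩ := hf_ne_zero
  have := isPrime_jetAnnihilator hU_conn ⟨z₀, hz₀⟩ hf
  refine eq_bot_of_gammaShift_mem (fun P hP => ?_) (fun hX => hfz₀ ?_) fun a ha =>
    eq_zero_of_C_mem_jetAnnihilator hU ⟨z₀, hz₀⟩ ha
  · refine mem_jetAnnihilator.2 fun z hz => ?_
    rw [evalJet_gammaShift hU hf hfeq hz]
    exact mem_jetAnnihilator.1 hP _ (hU_add_one z hz)
  · simpa only [evalJet_X, iteratedDeriv_zero] using mem_jetAnnihilator.1 hX z₀ hz₀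

end Jets

theorem ne_neg_natCast_of_re_pos {z : ℂ} (hz : 0 < z.re) (k : ℕ) : z ≠ -(k : ℂ) := by
  rintro rfl
  exact hz.not_ge (by simp)

theorem analyticOnNhd_Gamma_re_pos : AnalyticOnNhd ℂ Complex.Gamma {z | 0 < z.re} :=
  DifferentiableOn.analyticOnNhd
    (fun z hz => (Complex.differentiableAt_Gamma z
      (ne_neg_natCast_of_re_pos hz)).differentiableWithinAt)
    (isOpen_lt continuous_const Complex.continuous_re)

end HolderGamma

open HolderGamma in
theorem complexGamma_diffTranscendental_general {f : ℂ → ℂ} {U : Set ℂ} (hU : IsOpen U)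
    (hU_conn : IsPreconnected U) (hU_add_one : ∀ z ∈ U, z + 1 ∈ U) (hf : AnalyticOnNhd ℂ f U)
    (hfeq : ∀ z ∈ U, f (z + 1) = z * f z) (hf_ne_zero : ∃ z ∈ U, f z ≠ 0)
    {n : ℕ} {P : MvPolynomial (Fin (n + 1)) ℂ}
    (hP : ∀ z ∈ U, MvPolynomial.eval
      (fun i => if i.val = 0 then z else iteratedDeriv (i.val - 1) f z) P = 0) :
    P = 0 := by
  have hmem : toJetRing ℂ n P ∈ jetAnnihilator f U :=
    mem_jetAnnihilator.2 fun z hz => (evalJet_toJetRing f z P).trans (hP z hz)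
  rw [jetAnnihilator_eq_bot hU hU_conn hU_add_one hf hfeq hf_ne_zero, Ideal.mem_bot] at hmem
  exact (map_eq_zero_iff _ (toJetRing_injective ℂ n)).1 hmem

/-- The complex Gamma function is differentially transcendental: there are no `n ∈ ℕ` and
nonzero polynomial `P ∈ ℂ[X₀, …, X_{n+1}]` with `P (z, Γ z, Γ' z, …, Γ⁽ⁿ⁾ z) = 0` at every
`z ∈ ℂ` that is not a nonpositive integer (i.e. at every point where `Γ` is analytic). -/
theorem complexGamma_diffTranscendental :
    ¬ ∃ (n : ℕ) (P : MvPolynomial (Fin (n + 2)) ℂ),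
      P ≠ 0 ∧ ∀ z : ℂ, (∀ k : ℕ, z ≠ -(k : ℂ)) →
        MvPolynomial.eval
          (fun i : Fin (n + 2) =>
            if i.val = 0 then z else iteratedDeriv (i.val - 1) Complex.Gamma z) P = 0 := by
  rintro ⟨n, P, hP_ne_zero, hP⟩
  refine hP_ne_zero (complexGamma_diffTranscendental_general (U := {z | 0 < z.re})
    (isOpen_lt continuous_const Complex.continuous_re)
    (convex_halfSpace_re_gt 0).isPreconnected
    (fun z (hz : 0 < z.re) => add_pos hz one_pos)
    HolderGamma.analyticOnNhd_Gamma_re_pos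
    (fun z hz => Complex.Gamma_add_one z ?_)
    ⟨1, by simp⟩
    fun z hz => hP z (HolderGamma.ne_neg_natCast_of_re_pos hz))
  simpa using HolderGamma.ne_neg_natCast_of_re_pos hz 0
end

section
/- The Riemann zeta function ζ is differentially transcendental: there do not exist n ∈ ℕ and a nonzero polynomial P ∈ ℂ[X₀, X₁, …, X_{n+1}] such that P(s, ζ(s), ζ′(s), …, ζ⁽ⁿ⁾(s)) = 0 for every s ∈ ℂ at which ζ is analytic (i.e., every s ≠ 1). -/
/-!
Let `f₀, …, fₙ` be the coefficient sequences of the derivatives of a Dirichlet series `∑ f(m) m⁻ˢ`,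
so `fₖ(m) = (-log m)ᵏ f(m)`. Under Bohr's identification of arithmetic functions with power series
in one variable per prime, the partial derivatives `∂_p` form a family of derivations of the
Dirichlet ring with `(∂_p g)(1) = g(p)`. The Jacobian matrix `(∂_{pᵢ} fⱼ)` therefore has the
determinant `det (f(pᵢ) (-log pᵢ)ʲ)` at `1`, essentially a Vandermonde determinant, and by the
Jacobian criterion the `fₖ` are algebraically independent over `ℂ` as soon as `f(p) ≠ 0` for
infinitely many primes `p`.

It remains to adjoin the variable `s`. If `∑ⱼ Dⱼ(s) sʲ = 0` with Dirichlet series `Dⱼ`, and `m` is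
the first index at which some `Dⱼ` has a nonzero coefficient `dⱼ(m)`, then multiplying by `mˢ` shows
that the polynomial `∑ⱼ dⱼ(m) sʲ` tends to `0` as `s → ∞`, hence vanishes. So all `Dⱼ` are zero.
-/

open Filter Topology

namespace DifferentialTranscendence

section JacobianCriterion

open MvPolynomial

variable {ι R A : Type*}

lemma derivation_aeval [Fintype ι] [CommSemiring R] [CommSemiring A] [Algebra R A] {M : Type*}
    [AddCommMonoid M] [Module R M] [Module A M] (D : Derivation R A M) (f : ι → A)
    (P : MvPolynomial ι R) :
    D (aeval f P) = ∑ i, aeval f (pderiv i P) • D (f i) := by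
  classical
  induction P using MvPolynomial.induction_on with
  | C a => simp
  | add P Q hP hQ => simp [hP, hQ, add_smul, Finset.sum_add_distrib]
  | mul_X P j hP =>
    simp [hP, pderiv_X, Pi.single_apply, apply_ite (aeval f), ite_smul, add_smul, mul_smul,
      Finset.sum_add_distrib, Finset.smul_sum]

lemma totalDegree_pderiv_lt [CommSemiring R] {P : MvPolynomial ι R} {i : ι}
    (h : pderiv i P ≠ 0) : (pderiv i P).totalDegree < P.totalDegree := by
  have hlt : ∀ m ∈ (pderiv i P).support, (m.sum fun _ e => e) < P.totalDegree := by
    intro m hm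
    rw [mem_support_iff, coeff_pderiv] at hm
    have hle := le_totalDegree (mem_support_iff.mpr (left_ne_zero_of_mul hm))
    rw [Finsupp.sum_add_index' (by simp) (by simp), Finsupp.sum_single_index rfl] at hle
    omega
  obtain ⟨m, hm⟩ := support_nonempty.mpr h
  exact (Finset.sup_lt_iff ((Nat.zero_le _).trans_lt (hlt m hm))).mpr hlt

lemma eq_C_of_pderiv_eq_zero [CommRing R] [IsAddTorsionFree R] {P : MvPolynomial ι R}
    (h : ∀ i, pderiv i P = 0) : P = C (constantCoeff P) := by
  rw [← MvPolynomial.coe_inj]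
  refine MvPowerSeries.pderiv.ext (fun i => ?_) ?_
  · rw [MvPowerSeries.pderiv_coe, MvPowerSeries.pderiv_coe, h i, pderiv_C]
  · rw [← MvPowerSeries.coeff_zero_eq_constantCoeff_apply,
      ← MvPowerSeries.coeff_zero_eq_constantCoeff_apply, coeff_coe, coeff_coe, coeff_zero_C,
      constantCoeff_eq]

variable [CommRing R] [CommRing A] [Algebra R A] [Fintype ι] [DecidableEq ι]

lemma aeval_pderiv_eq_zero_of_det_mem_nonZeroDivisors {f : ι → A} {D : ι → Derivation R A A}
    (hdet : (Matrix.of fun i j => D i (f j)).det ∈ nonZeroDivisors A) {P : MvPolynomial ι R}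
    (hP : aeval f P = 0) (i : ι) : aeval f (pderiv i P) = 0 := by
  refine congrFun (Matrix.eq_zero_of_det_mem_nonZeroDivisors_of_mulVec_eq_zero hdet
    (v := fun j => aeval f (pderiv j P)) ?_) i
  ext k
  have hchain := derivation_aeval (D k) f P
  rw [hP, map_zero] at hchain
  simpa [Matrix.mulVec, dotProduct, mul_comm] using hchain.symm

theorem algebraicIndependent_of_det_derivation_mem_nonZeroDivisors [IsAddTorsionFree R]
    (hRA : Function.Injective (algebraMap R A)) {f : ι → A} {D : ι → Derivation R A A}
    (hdet : (Matrix.of fun i j => D i (f j)).det ∈ nonZeroDivisors A) :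
    AlgebraicIndependent R f := by
  rw [algebraicIndependent_iff]
  intro P
  induction hd : P.totalDegree using Nat.strong_induction_on generalizing P with
  | _ d ih =>
  intro hP
  have hpderiv (i : ι) : pderiv i P = 0 := by
    by_contra hne
    exact hne (ih _ (hd ▸ totalDegree_pderiv_lt hne) _ rfl
      (aeval_pderiv_eq_zero_of_det_mem_nonZeroDivisors hdet hP i))
  have hconst := eq_C_of_pderiv_eq_zero hpderiv
  rw [hconst, aeval_C, map_eq_zero_iff _ hRA] at hP
  rw [hconst, hP, C_0]

end JacobianCriterion

section DirichletRing

open ArithmeticFunction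

variable {R : Type*}

/-- Evaluation at `1`, the constant term in Bohr's correspondence, as a homomorphism from the
Dirichlet ring. -/
def evalOneHom (R : Type*) [Semiring R] : ArithmeticFunction R →+* R where
  toFun f := f 1
  map_one' := one_one
  map_mul' _ _ := mul_apply_one
  map_zero' := rfl
  map_add' _ _ := rfl

/-- The linear map underlying `primeDerivation`: the operator `∂_p` on arithmetic functions given by
`(∂_p f)(m) = v_p(p m) f(p m)`. -/
def primeDeriv (R : Type*) [CommSemiring R] (p : ℕ) :
    ArithmeticFunction R →ₗ[R] ArithmeticFunction R where
  toFun f := ⟨fun m => padicValNat p (p * m) * f (p * m), by simp⟩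
  map_add' _ _ := by ext; exact mul_add _ _ _
  map_smul' _ _ := by ext; exact mul_left_comm _ _ _

lemma primeDeriv_apply [CommSemiring R] (p : ℕ) (f : ArithmeticFunction R) (m : ℕ) :
    primeDeriv R p f m = padicValNat p (p * m) * f (p * m) := rfl

lemma primeDeriv_mul_apply_eq_sum [CommSemiring R] {p : ℕ} (hp : p.Prime)
    (f g : ArithmeticFunction R) (m : ℕ) :
    (primeDeriv R p f * g) m =
      ∑ x ∈ (p * m).divisorsAntidiagonal, padicValNat p x.1 * f x.1 * g x.2 := by
  rw [mul_apply]
  refine Finset.sum_of_injOn (fun x => (p * x.1, x.2)) ?_ ?_ ?_ fun _ _ => rfl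
  · rintro ⟨a, b⟩ _ ⟨c, d⟩ _ h
    simpa [hp.ne_zero] using h
  · rintro ⟨a, b⟩ h
    simp only [Finset.mem_coe, Nat.mem_divisorsAntidiagonal] at h ⊢
    exact ⟨by rw [mul_assoc, h.1], mul_ne_zero hp.ne_zero h.2⟩
  · rintro ⟨a, b⟩ h hnot
    rw [Nat.mem_divisorsAntidiagonal] at h
    have hpa : ¬ p ∣ a := by
      rintro ⟨c, rfl⟩
      refine hnot ⟨(c, b), ?_, rfl⟩
      rw [Finset.mem_coe, Nat.mem_divisorsAntidiagonal]
      exact ⟨Nat.eq_of_mul_eq_mul_left hp.pos (by rw [← mul_assoc, h.1]),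
        right_ne_zero_of_mul h.2⟩
    simp [padicValNat.eq_zero_of_not_dvd hpa]

lemma primeDeriv_mul [CommSemiring R] {p : ℕ} (hp : p.Prime) (f g : ArithmeticFunction R) :
    primeDeriv R p (f * g) = f • primeDeriv R p g + g • primeDeriv R p f := by
  have := Fact.mk hp
  ext m
  have hswap : (primeDeriv R p g * f) m =
      ∑ x ∈ (p * m).divisorsAntidiagonal, padicValNat p x.2 * g x.2 * f x.1 := by
    rw [primeDeriv_mul_apply_eq_sum hp]
    conv_lhs => rw [← Nat.map_swap_divisorsAntidiagonal, Finset.sum_map]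
    rfl
  rw [smul_eq_mul, smul_eq_mul, mul_comm f (primeDeriv R p g), mul_comm g,
    ArithmeticFunction.add_apply, hswap, primeDeriv_mul_apply_eq_sum hp,
    ← Finset.sum_add_distrib, primeDeriv_apply, mul_apply, Finset.mul_sum]
  refine Finset.sum_congr rfl fun x hx => ?_
  obtain ⟨hx₁, hx₂⟩ := Nat.ne_zero_of_mem_divisorsAntidiagonal hx
  rw [← (Nat.mem_divisorsAntidiagonal.mp hx).1, padicValNat.mul hx₁ hx₂]
  push_cast
  ring

/-- The derivation `∂_p` of the Dirichlet ring attached to a prime `p`. It is the partial derivative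
with respect to the variable `X_p` when arithmetic functions are read as power series in variables
indexed by the primes, `f` corresponding to `∑ f(m) ∏ X_p ^ v_p(m)`. -/
def primeDerivation (R : Type*) [CommRing R] {p : ℕ} (hp : p.Prime) :
    Derivation R (ArithmeticFunction R) (ArithmeticFunction R) :=
  Derivation.mk' (primeDeriv R p) (primeDeriv_mul hp)

lemma primeDerivation_apply_one [CommRing R] {p : ℕ} (hp : p.Prime) (f : ArithmeticFunction R) :
    primeDerivation R hp f 1 = f p := by
  have := Fact.mk hp
  change primeDeriv R p f 1 = f p
  simp [primeDeriv_apply]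

theorem algebraicIndependent_of_isUnit_det_apply_prime [CommRing R] [IsAddTorsionFree R]
    {ι : Type*} [Fintype ι] [DecidableEq ι] {f : ι → ArithmeticFunction R} {p : ι → ℕ}
    (hp : ∀ i, (p i).Prime) (hdet : IsUnit (Matrix.of fun i j => f j (p i)).det) :
    AlgebraicIndependent R f := by
  have hinj : Function.Injective (algebraMap R (ArithmeticFunction R)) := fun a b hab => by
    simpa only [algebraMap_apply_one, Algebra.algebraMap_self_apply] using DFunLike.congr_fun hab 1
  refine algebraicIndependent_of_det_derivation_mem_nonZeroDivisors hinj
    (D := fun i => primeDerivation R (hp i)) (IsUnit.mem_nonZeroDivisors ?_)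
  rw [isUnit_iff_isUnit_apply_one]
  change IsUnit (evalOneHom R _)
  rw [RingHom.map_det]
  convert hdet using 2
  ext i j
  exact primeDerivation_apply_one (hp i) (f j)

end DirichletRing

section DerivativeCoefficients

/-- The coefficients `(-log m)ᵏ f(m)` of the `k`-th derivative of the Dirichlet series of `f`. They
are set to `0` at `m = 0`, which no Dirichlet series sees. -/
noncomputable def derivCoeff (f : ℕ → ℂ) (k : ℕ) : ArithmeticFunction ℂ :=
  toArithmeticFunction fun m => f m * (-Complex.log m) ^ k

lemma derivCoeff_apply (f : ℕ → ℂ) (k : ℕ) {m : ℕ} (hm : m ≠ 0) :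
    derivCoeff f k m = f m * (-Complex.log m) ^ k :=
  if_neg hm

lemma logMul_iterate_apply (f : ℕ → ℂ) (k m : ℕ) :
    LSeries.logMul^[k] f m = Complex.log m ^ k * f m := by
  induction k with
  | zero => simp
  | succ k ih => rw [Function.iterate_succ_apply', LSeries.logMul, ih, pow_succ', mul_assoc]

theorem LSeriesHasSum_derivCoeff {f : ℕ → ℂ} {s : ℂ} (hs : LSeries.abscissaOfAbsConv f < s.re)
    (k : ℕ) : LSeriesHasSum (derivCoeff f k) s (iteratedDeriv k (LSeries f) s) := by
  have hcoeff {m : ℕ} (hm : m ≠ 0) :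
      derivCoeff f k m = ((-1 : ℂ) ^ k • LSeries.logMul^[k] f) m := by
    rw [derivCoeff_apply f k hm, Pi.smul_apply, logMul_iterate_apply, neg_pow, smul_eq_mul]
    ring
  have hsummable : LSeriesSummable (LSeries.logMul^[k] f) s :=
    LSeriesSummable_of_abscissaOfAbsConv_lt_re (by rwa [LSeries.absicssaOfAbsConv_logPowMul])
  rw [LSeriesHasSum_congr s _ hcoeff, LSeries_iteratedDeriv k hs, ← smul_eq_mul]
  exact hsummable.LSeriesHasSum.smul _

lemma injOn_neg_log_natCast :
    Set.InjOn (fun m : ℕ => -Complex.log m) {m | m ≠ 0} := by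
  intro a ha b hb hab
  simp only [neg_inj, ← Complex.natCast_log, Complex.ofReal_inj] at hab
  exact_mod_cast Real.log_injOn_pos (Set.mem_Ioi.mpr <| Nat.cast_pos.mpr <| Nat.pos_of_ne_zero ha)
    (Set.mem_Ioi.mpr <| Nat.cast_pos.mpr <| Nat.pos_of_ne_zero hb) hab

theorem algebraicIndependent_derivCoeff {f : ℕ → ℂ} (hf : {p | p.Prime ∧ f p ≠ 0}.Infinite)
    (n : ℕ) : AlgebraicIndependent ℂ fun k : Fin n => derivCoeff f k := by
  let p (i : Fin n) : ℕ := hf.natEmbedding _ i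
  have hp (i : Fin n) : (p i).Prime ∧ f (p i) ≠ 0 := (hf.natEmbedding _ i).2
  have hp_inj : Function.Injective p :=
    Subtype.val_injective.comp ((hf.natEmbedding _).injective.comp Fin.val_injective)
  have hlog_inj : Function.Injective fun i => -Complex.log (p i) := fun i j hij =>
    hp_inj (injOn_neg_log_natCast (hp i).1.ne_zero (hp j).1.ne_zero hij)
  have hmatrix : (Matrix.of fun i j : Fin n => derivCoeff f j (p i)) =
      Matrix.of fun i j => f (p i) * Matrix.vandermonde (fun i => -Complex.log (p i)) i j := by
    ext i j
    exact derivCoeff_apply f j (hp i).1.ne_zero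
  refine algebraicIndependent_of_isUnit_det_apply_prime (fun i => (hp i).1) ?_
  rw [hmatrix, Matrix.det_mul_column, isUnit_iff_ne_zero]
  exact mul_ne_zero (Finset.prod_ne_zero_iff.mpr fun i _ => (hp i).2)
    (Matrix.det_vandermonde_ne_zero_iff.mpr hlog_inj)

end DerivativeCoefficients

section PolynomialCoefficients

lemma polynomial_eq_zero_of_tendsto_eval_zero {α 𝕜 : Type*} [NormedField 𝕜] {l : Filter α} [l.NeBot]
    {z : α → 𝕜} (hz : Tendsto (fun x => ‖z x‖) l atTop) {P : Polynomial 𝕜}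
    (hP : Tendsto (fun x => P.eval (z x)) l (𝓝 0)) : P = 0 := by
  have hdeg : P.degree ≤ 0 := by
    by_contra! hpos
    exact not_tendsto_nhds_of_tendsto_atTop (P.tendsto_norm_atTop hpos hz) _ hP.norm
  rw [Polynomial.eq_C_of_degree_le_zero hdeg] at hP ⊢
  simp only [Polynomial.eval_C, tendsto_const_nhds_iff] at hP
  rw [hP, Polynomial.C_0]

lemma tendsto_pow_mul_rpow_atTop_nhds_zero (j : ℕ) {r : ℝ} (hr₀ : 0 < r) (hr₁ : r < 1) :
    Tendsto (fun x : ℝ => x ^ j * r ^ x) atTop (𝓝 0) := by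
  have h := tendsto_rpow_mul_exp_neg_mul_atTop_nhds_zero j (-Real.log r)
    (neg_pos.mpr (Real.log_neg hr₀ hr₁))
  simpa [Real.rpow_def_of_pos hr₀] using h

lemma LSeriesHasSum_update_zero {f : ℕ → ℂ} {s a : ℂ} (hf : LSeriesHasSum f s a) {m : ℕ}
    (hm : m ≠ 0) : LSeriesHasSum (Function.update f m 0) s (a - f m / m ^ s) := by
  have hterm : LSeries.term (Function.update f m 0) s =
      Function.update (LSeries.term f s) m 0 := by
    ext k
    rcases eq_or_ne k m with rfl | hk
    · simp [LSeries.term_def]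
    · simp [LSeries.term_def, hk]
  rw [LSeriesHasSum, hterm, ← LSeries.term_of_ne_zero hm, sub_eq_neg_add, ← zero_sub]
  exact HasSum.update hf m 0

lemma ofReal_div_rpow_mul_cpow {a b : ℝ} (ha : 0 ≤ a) (hb : 0 < b) (x : ℝ) :
    (((a / b) ^ x : ℝ) : ℂ) * (b : ℂ) ^ (x : ℂ) = (a : ℂ) ^ (x : ℂ) := by
  rw [← Complex.ofReal_cpow hb.le, ← Complex.ofReal_cpow ha, ← Complex.ofReal_mul,
    ← Real.mul_rpow (by positivity) hb.le, div_mul_cancel₀ a hb.ne']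

lemma tendsto_pow_mul_cpow_mul_LSeries_atTop_nhds_zero {f : ℕ → ℂ} {n : ℕ} (hn : n ≠ 0)
    (hzero : ∀ m ≤ n, f m = 0) (hf : LSeries.abscissaOfAbsConv f < ⊤) (j : ℕ) :
    Tendsto (fun x : ℝ => (x : ℂ) ^ j * ((n : ℂ) ^ (x : ℂ) * LSeries f x)) atTop (𝓝 0) := by
  have hn₀ : (0 : ℝ) < n := by positivity
  have hratio : (n / (n + 1) : ℝ) < 1 := (div_lt_one (by positivity)).mpr (lt_add_one _)
  have hlim := (tendsto_pow_mul_rpow_atTop_nhds_zero j (by positivity) hratio).ofReal.mul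
    (LSeries.tendsto_cpow_mul_atTop hzero hf)
  rw [Complex.ofReal_zero, zero_mul] at hlim
  refine hlim.congr fun x => ?_
  have hcpow := ofReal_div_rpow_mul_cpow hn₀.le (b := n + 1) (by positivity) x
  push_cast at hcpow ⊢
  rw [← hcpow]
  ring

-- Removing the leading coefficient `f (n + 1)` leaves a Dirichlet series starting at `n + 2`.
lemma tendsto_pow_mul_cpow_mul_LSeries_sub_atTop_nhds_zero {f : ℕ → ℂ} {n : ℕ}
    (hzero : ∀ m ≤ n, f m = 0) (hf : LSeries.abscissaOfAbsConv f < ⊤) (j : ℕ) :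
    Tendsto (fun x : ℝ => (x : ℂ) ^ j * (((n + 1 : ℕ) : ℂ) ^ (x : ℂ) * LSeries f x - f (n + 1)))
      atTop (𝓝 0) := by
  obtain ⟨y, hfy, -⟩ := EReal.lt_iff_exists_real_btwn.mp hf
  have htail {x : ℝ} (hx : y ≤ x) := LSeriesHasSum_update_zero
    (LSeriesSummable_of_abscissaOfAbsConv_lt_re (s := x)
      (hfy.trans_le (EReal.coe_le_coe_iff.mpr hx))).LSeriesHasSum n.succ_ne_zero
  have htail_zero : ∀ m ≤ n + 1, Function.update f (n + 1) 0 m = 0 := fun m hm => by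
    rcases hm.lt_or_eq with hm | rfl
    · rw [Function.update_of_ne hm.ne, hzero m (Nat.lt_succ_iff.mp hm)]
    · exact Function.update_self ..
  refine (tendsto_pow_mul_cpow_mul_LSeries_atTop_nhds_zero n.succ_ne_zero htail_zero
    ((htail le_rfl).LSeriesSummable.abscissaOfAbsConv_le.trans_lt (EReal.coe_lt_top _)) j).congr' ?_
  filter_upwards [eventually_ge_atTop y] with x hx
  have hne : ((n + 1 : ℕ) : ℂ) ^ (x : ℂ) ≠ 0 :=
    Complex.cpow_ne_zero_iff.mpr (.inl (Nat.cast_ne_zero.mpr n.succ_ne_zero))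
  rw [(htail hx).LSeries_eq, mul_sub, mul_div_cancel₀ _ hne]

lemma apply_succ_eq_zero_of_sum_LSeries_mul_pow_eq_zero {S : Finset ℕ} {d : ℕ → ℕ → ℂ} {n : ℕ}
    (hd : ∀ j ∈ S, LSeries.abscissaOfAbsConv (d j) < ⊤)
    (hsum : ∀ᶠ x : ℝ in atTop, ∑ j ∈ S, LSeries (d j) x * (x : ℂ) ^ j = 0)
    (hzero : ∀ j ∈ S, ∀ m ≤ n, d j m = 0) : ∀ j ∈ S, d j (n + 1) = 0 := by
  let Q : Polynomial ℂ := ∑ j ∈ S, Polynomial.monomial j (d j (n + 1))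
  have hQ_lim : Tendsto (fun x : ℝ => Q.eval (x : ℂ)) atTop (𝓝 0) := by
    have hdiff := (tendsto_finsetSum S fun j hj =>
      tendsto_pow_mul_cpow_mul_LSeries_sub_atTop_nhds_zero (hzero j hj) (hd j hj) j).neg
    rw [Finset.sum_const_zero, neg_zero] at hdiff
    refine hdiff.congr' ?_
    filter_upwards [hsum] with x hx
    calc -∑ j ∈ S, (x : ℂ) ^ j * (((n + 1 : ℕ) : ℂ) ^ (x : ℂ) * LSeries (d j) x - d j (n + 1))
        = ∑ j ∈ S, d j (n + 1) * (x : ℂ) ^ j -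
            ((n + 1 : ℕ) : ℂ) ^ (x : ℂ) * ∑ j ∈ S, LSeries (d j) x * (x : ℂ) ^ j := by
          rw [Finset.mul_sum, ← Finset.sum_sub_distrib, ← Finset.sum_neg_distrib]
          exact Finset.sum_congr rfl fun j _ => by ring
      _ = Q.eval (x : ℂ) := by
          simp [Q, hx, Polynomial.eval_finsetSum]
  have hQ : Q = 0 := polynomial_eq_zero_of_tendsto_eval_zero
    (by simpa using tendsto_abs_atTop_atTop) hQ_lim
  intro j hj
  simpa [Q, Polynomial.finsetSum_coeff, Polynomial.coeff_monomial, hj] using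
    congrArg (Polynomial.coeff · j) hQ

theorem eq_zero_of_sum_LSeries_mul_pow_eq_zero {S : Finset ℕ} {d : ℕ → ArithmeticFunction ℂ}
    (hd : ∀ j ∈ S, LSeries.abscissaOfAbsConv (d j) < ⊤)
    (hsum : ∀ᶠ x : ℝ in atTop, ∑ j ∈ S, LSeries (d j) x * (x : ℂ) ^ j = 0) :
    ∀ j ∈ S, d j = 0 := by
  suffices hzero : ∀ m, ∀ j ∈ S, d j m = 0 from fun j hj => ArithmeticFunction.ext (hzero · j hj)
  intro m
  induction m using Nat.strong_induction_on with
  | _ m ih =>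
  cases m with
  | zero => exact fun j _ => (d j).map_zero
  | succ m =>
    exact apply_succ_eq_zero_of_sum_LSeries_mul_pow_eq_zero hd hsum
      fun j hj k hk => ih k (Nat.lt_succ_of_le hk) j hj

end PolynomialCoefficients

section DifferentialPolynomials

open MvPolynomial

lemma LSeriesHasSum_algebraMap (c s : ℂ) :
    LSeriesHasSum (algebraMap ℂ (ArithmeticFunction ℂ) c) s c := by
  have hone : LSeriesHasSum (1 : ArithmeticFunction ℂ) s 1 := by
    rw [LSeriesHasSum, show ⇑(1 : ArithmeticFunction ℂ) = LSeries.delta from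
      ArithmeticFunction.one_eq_delta, funext (LSeries.term_delta s)]
    exact hasSum_ite_eq 1 1
  have hsmul := hone.smul c
  rw [mul_one] at hsmul
  rwa [Algebra.algebraMap_eq_smul_one]

theorem LSeriesHasSum_aeval {σ : Type*} {f : σ → ArithmeticFunction ℂ} {s : ℂ} {a : σ → ℂ}
    (hf : ∀ i, LSeriesHasSum (f i) s (a i)) (P : MvPolynomial σ ℂ) :
    LSeriesHasSum (aeval f P) s (eval a P) := by
  induction P using MvPolynomial.induction_on with
  | C c =>
    rw [aeval_C, eval_C]
    exact LSeriesHasSum_algebraMap c s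
  | add P Q hP hQ =>
    rw [map_add, map_add]
    exact hP.add hQ
  | mul_X P i hP =>
    rw [map_mul, map_mul, aeval_X, eval_X]
    exact ArithmeticFunction.LSeriesHasSum_mul hP (hf i)

theorem eq_zero_of_eval_LSeries_eq_zero {σ : Type*} {f : σ → ArithmeticFunction ℂ}
    (hf : AlgebraicIndependent ℂ f) {a : ℝ → σ → ℂ}
    (ha : ∀ᶠ x : ℝ in atTop, ∀ i, LSeriesHasSum (f i) x (a x i))
    {P : Polynomial (MvPolynomial σ ℂ)}
    (hP : ∀ᶠ x : ℝ in atTop, (P.map (eval (a x))).eval (x : ℂ) = 0) : P = 0 := by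
  have hconv (j : ℕ) :
      LSeries.abscissaOfAbsConv (aeval f (P.coeff j) : ArithmeticFunction ℂ) < ⊤ := by
    obtain ⟨x, hx⟩ := ha.exists
    exact (LSeriesHasSum_aeval hx (P.coeff j)).LSeriesSummable.abscissaOfAbsConv_le.trans_lt
      (EReal.coe_lt_top _)
  have hsum : ∀ᶠ x : ℝ in atTop, ∑ j ∈ P.support,
      LSeries (aeval f (P.coeff j) : ArithmeticFunction ℂ) x * (x : ℂ) ^ j = 0 := by
    filter_upwards [ha, hP] with x hax hPx
    rw [Polynomial.eval_map, Polynomial.eval₂_eq_sum] at hPx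
    rw [← hPx]
    exact Finset.sum_congr rfl fun j _ => by rw [(LSeriesHasSum_aeval hax _).LSeries_eq]
  have hcoeff := eq_zero_of_sum_LSeries_mul_pow_eq_zero (fun j _ => hconv j) hsum
  by_contra hne
  obtain ⟨j, hj⟩ := Polynomial.support_nonempty.mpr hne
  exact Polynomial.mem_support_iff.mp hj
    ((algebraicIndependent_iff.mp hf) _ (hcoeff j hj))

end DifferentialPolynomials

end DifferentialTranscendence

open DifferentialTranscendence in
theorem riemannZeta_diffTranscendental_general {f : ℕ → ℂ} {F : ℂ → ℂ} {c : ℝ}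
    (hf : LSeries.abscissaOfAbsConv f < ⊤) (hprime : {p | p.Prime ∧ f p ≠ 0}.Infinite)
    (hF : ∀ s : ℂ, c < s.re → F s = LSeries f s) :
    ¬ ∃ (n : ℕ) (P : MvPolynomial (Fin (n + 2)) ℂ),
      P ≠ 0 ∧ ∀ s : ℂ, c < s.re →
        MvPolynomial.eval
          (fun i : Fin (n + 2) =>
            if i.val = 0 then s else iteratedDeriv (i.val - 1) F s) P = 0 := by
  rintro ⟨n, P, hP, h⟩
  obtain ⟨y, hfy, -⟩ := EReal.lt_iff_exists_real_btwn.mp hf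
  have hcoeff : ∀ᶠ x : ℝ in atTop, ∀ k : Fin (n + 1),
      LSeriesHasSum (derivCoeff f k) x (iteratedDeriv k F x) := by
    filter_upwards [eventually_gt_atTop c, eventually_ge_atTop y] with x hcx hyx k
    have hFf : F =ᶠ[𝓝 (x : ℂ)] LSeries f :=
      eventually_of_mem ((isOpen_lt continuous_const Complex.continuous_re).mem_nhds hcx) hF
    rw [hFf.iteratedDeriv_eq]
    exact LSeriesHasSum_derivCoeff (hfy.trans_le (EReal.coe_le_coe_iff.mpr hyx)) k
  refine hP ((map_eq_zero_iff _ (MvPolynomial.finSuccEquiv ℂ (n + 1)).injective).mp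
    (eq_zero_of_eval_LSeries_eq_zero (algebraicIndependent_derivCoeff hprime (n + 1)) hcoeff ?_))
  filter_upwards [eventually_gt_atTop c] with x hx
  rw [← MvPolynomial.eval_eq_eval_mv_eval', ← h x hx]
  congr 2 with i
  cases i using Fin.cases <;> simp

/-- The Riemann zeta function is differentially transcendental: there are no `n ∈ ℕ` and
nonzero polynomial `P ∈ ℂ[X₀, …, X_{n+1}]` with `P (s, ζ s, ζ' s, …, ζ⁽ⁿ⁾ s) = 0` at every
`s ≠ 1` (i.e. at every point where `ζ` is analytic). -/
theorem riemannZeta_diffTranscendental :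
    ¬ ∃ (n : ℕ) (P : MvPolynomial (Fin (n + 2)) ℂ),
      P ≠ 0 ∧ ∀ s : ℂ, s ≠ 1 →
        MvPolynomial.eval
          (fun i : Fin (n + 2) =>
            if i.val = 0 then s else iteratedDeriv (i.val - 1) riemannZeta s) P = 0 := by
  rintro ⟨n, P, hP, h⟩
  exact riemannZeta_diffTranscendental_general (f := 1) (c := 1)
    (LSeries.abscissaOfAbsConv_one.trans_lt (EReal.coe_lt_top 1))
    (by simpa using Nat.infinite_setOfPred_prime)
    (fun s hs => (LSeries_one_eq_riemannZeta hs).symm)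
    ⟨n, P, hP, fun s hs => h s (by rintro rfl; simp at hs)⟩
end

section
/- The Dirichlet eta function η, i.e., the entire function given by η(s) = (1 − 2^{1−s})·ζ(s) for s ≠ 1 (and agreeing with ∑_{n=1}^∞ (−1)^{n+1} n^{−s} for Re(s) > 1), is differentially transcendental: there do not exist n ∈ ℕ and a nonzero polynomial P ∈ ℂ[X₀, X₁, …, X_{n+1}] such that P(s, η(s), η′(s), …, η⁽ⁿ⁾(s)) = 0 for all s ∈ ℂ. -/
/-!
On the half-plane `Re s > 1` the eta function is the sum of a Dirichlet series whose coefficients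
are nonzero at every prime, and any such series is differentially transcendental.

A relation `∑ₖ sᵏ Lₖ(s) = 0` between Dirichlet series forces every `Lₖ` to vanish: if `n` is the
first index at which some `Lₖ` has a nonzero coefficient, multiplying by `nˢ` and letting `s → ∞`
leaves a nonzero polynomial in `s` tending to `0`. So the explicit variable `s` can be eliminated,
and it remains to see that the arithmetic functions `(-log n)ʲ a(n)` are algebraically independent
over `ℂ` under Dirichlet convolution.

By induction on the degree of a relation `Q`, it suffices that its partial derivatives `∂ⱼQ` are
again relations. For each prime `p`, multiplication by the `p`-adic valuation is a derivation, and
applying it to `Q` gives a linear relation between the `∂ⱼQ`. At `d * p`, where `d` is the first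
index not yet known to annihilate all of the `∂ⱼQ`, that relation reads
`∑ⱼ ∂ⱼQ(d) (-log p)ʲ a(p) = 0`. As this holds for infinitely many `p` with `a(p) ≠ 0`, a Vandermonde
determinant gives `∂ⱼQ(d) = 0`.
-/

open ArithmeticFunction Filter MvPolynomial Topology

section AlgebraicIndependence

variable {K σ A M : Type*}

theorem totalDegree_pderiv_lt [CommSemiring K] {Q : MvPolynomial σ K} {i : σ}
    (h : pderiv i Q ≠ 0) : (pderiv i Q).totalDegree < Q.totalDegree := by
  classical
  obtain ⟨e, he, hdeg⟩ := Finset.exists_mem_eq_sup _ (support_nonempty.2 h)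
    (fun e : σ →₀ ℕ => e.sum fun _ k => k)
  have he' : e + Finsupp.single i 1 ∈ Q.support := by
    rw [mem_support_iff, coeff_pderiv] at he
    exact mem_support_iff.2 (left_ne_zero_of_mul he)
  calc (pderiv i Q).totalDegree = e.sum fun _ k => k := hdeg
    _ < (e + Finsupp.single i 1).sum fun _ k => k := by
      rw [Finsupp.sum_add_index' (fun _ => rfl) (fun _ _ _ => rfl)]
      simp
    _ ≤ Q.totalDegree := le_totalDegree he'

theorem eq_C_of_pderiv_eq_zero [CommRing K] [IsAddTorsionFree K] {Q : MvPolynomial σ K}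
    (h : ∀ i, pderiv i Q = 0) : Q = C (constantCoeff Q) := by
  refine MvPolynomial.coe_injective σ K (MvPowerSeries.pderiv.ext (fun i => ?_) ?_)
  · rw [MvPowerSeries.pderiv_coe, MvPowerSeries.pderiv_coe, h i, pderiv_C]
  · rw [← MvPowerSeries.coeff_zero_eq_constantCoeff_apply,
      ← MvPowerSeries.coeff_zero_eq_constantCoeff_apply, coeff_coe, coeff_coe, coeff_zero_C,
      constantCoeff_eq]

theorem algebraicIndependent_of_aeval_pderiv [CommRing K] [IsAddTorsionFree K]
    [CommRing A] [Algebra K A] [FaithfulSMul K A] {x : σ → A}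
    (h : ∀ Q : MvPolynomial σ K, aeval x Q = 0 → ∀ i, aeval x (pderiv i Q) = 0) :
    AlgebraicIndependent K x := by
  refine algebraicIndependent_iff.2 fun Q hQ => ?_
  induction hd : Q.totalDegree using Nat.strong_induction_on generalizing Q with
  | _ d ih =>
    have hpderiv (i : σ) : pderiv i Q = 0 := by
      by_contra hi
      exact hi (ih _ (hd ▸ totalDegree_pderiv_lt hi) _ (h Q hQ i) rfl)
    rw [eq_C_of_pderiv_eq_zero hpderiv, aeval_C, FaithfulSMul.algebraMap_eq_zero_iff] at hQ
    rw [eq_C_of_pderiv_eq_zero hpderiv, hQ, C_0]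

theorem derivation_aeval [CommSemiring K] [CommSemiring A] [AddCommMonoid M] [Algebra K A]
    [Module K M] [Module A M] [IsScalarTower K A M] [Fintype σ]
    (D : Derivation K A M) (x : σ → A) (Q : MvPolynomial σ K) :
    D (aeval x Q) = ∑ i, aeval x (pderiv i Q) • D (x i) := by
  classical
  induction Q using MvPolynomial.induction_on with
  | C c => simp
  | add P Q hP hQ => simp [hP, hQ, add_smul, Finset.sum_add_distrib]
  | mul_X P j hP =>
    simp [hP, pderiv_X, Pi.single_apply, add_smul, Finset.sum_add_distrib, Finset.smul_sum,
      mul_smul, apply_ite, ite_smul]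

end AlgebraicIndependence

section WeightDerivation

theorem finsetSum_apply {ι M : Type*} [AddCommMonoid M] (s : Finset ι)
    (f : ι → ArithmeticFunction M) (n : ℕ) : (∑ i ∈ s, f i) n = ∑ i ∈ s, f i n :=
  map_sum (⟨⟨fun g => g n, rfl⟩, fun _ _ => rfl⟩ : ArithmeticFunction M →+ M) f s

variable {R : Type*} [CommRing R]

/-- Complete additivity of an arithmetic function. The value at `0` is exempt, being forced to
be `0`. -/
def IsCompletelyAdditive (w : ArithmeticFunction R) : Prop :=
  ∀ ⦃m n : ℕ⦄, m ≠ 0 → n ≠ 0 → w (m * n) = w m + w n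

theorem IsCompletelyAdditive.pmul_mul {w : ArithmeticFunction R} (hw : IsCompletelyAdditive w)
    (f g : ArithmeticFunction R) : w.pmul (f * g) = f * w.pmul g + g * w.pmul f := by
  ext n
  simp only [mul_comm g, ArithmeticFunction.add_apply, pmul_apply, mul_apply, Finset.mul_sum,
    ← Finset.sum_add_distrib]
  refine Finset.sum_congr rfl fun x hx => ?_
  obtain ⟨rfl, hne⟩ := Nat.mem_divisorsAntidiagonal.1 hx
  rw [hw (left_ne_zero_of_mul hne) (right_ne_zero_of_mul hne)]
  ring

/-- Pointwise multiplication by a completely additive function, as a derivation of the ring of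
arithmetic functions under Dirichlet convolution. -/
def weightDerivation (w : ArithmeticFunction R) (hw : IsCompletelyAdditive w) :
    Derivation R (ArithmeticFunction R) (ArithmeticFunction R) :=
  Derivation.mk'
    { toFun := w.pmul
      map_add' := fun f g => by ext n; simp [mul_add]
      map_smul' := fun c f => by ext n; simp [mul_left_comm] }
    hw.pmul_mul

@[simp]
theorem weightDerivation_apply {w : ArithmeticFunction R} (hw : IsCompletelyAdditive w)
    (f : ArithmeticFunction R) (n : ℕ) : weightDerivation w hw f n = w n * f n := rfl

theorem iterate_weightDerivation_apply {w : ArithmeticFunction R} (hw : IsCompletelyAdditive w)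
    (f : ArithmeticFunction R) (k n : ℕ) :
    (weightDerivation w hw)^[k] f n = w n ^ k * f n := by
  induction k with
  | zero => simp
  | succ k ih => rw [Function.iterate_succ_apply', weightDerivation_apply, ih, pow_succ', mul_assoc]

/-- The `p`-adic valuation as an arithmetic function, with values in an arbitrary ring. -/
def padicWeight (R : Type*) [CommRing R] (p : ℕ) : ArithmeticFunction R :=
  ⟨fun n => padicValNat p n, by simp⟩

@[simp]
theorem padicWeight_apply (p n : ℕ) : padicWeight R p n = padicValNat p n := rfl

theorem isCompletelyAdditive_padicWeight (p : ℕ) [Fact p.Prime] :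
    IsCompletelyAdditive (padicWeight R p) := fun m n hm hn => by
  simp [padicValNat.mul hm hn]

/-- Multiplication by the `p`-adic valuation as a derivation. When arithmetic functions are
regarded as power series in indeterminates `X_p` indexed by the primes, this is the Euler operator
`X_p ∂/∂X_p`. -/
def padicDerivation (R : Type*) [CommRing R] (p : ℕ) [Fact p.Prime] :
    Derivation R (ArithmeticFunction R) (ArithmeticFunction R) :=
  weightDerivation (padicWeight R p) (isCompletelyAdditive_padicWeight p)

theorem mul_padicDerivation_apply_mul_prime (p : ℕ) [hp : Fact p.Prime]
    {f g : ArithmeticFunction R} {d : ℕ} (hd : d ≠ 0) (hg : ∀ n < d, g n = 0) :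
    (g * padicDerivation R p f) (d * p) = g d * f p := by
  rw [mul_apply, Finset.sum_eq_single (d, p)]
  · simp [padicDerivation]
  · rintro ⟨x, y⟩ hxy hne
    obtain ⟨hmul, -⟩ := Nat.mem_divisorsAntidiagonal.1 hxy
    by_cases hpy : p ∣ y
    · obtain ⟨z, rfl⟩ := hpy
      have hxz : x * z = d := Nat.eq_of_mul_eq_mul_right hp.out.pos (by linarith)
      have hxd : x ≠ d := by
        rintro rfl
        simp_all
      have hlt : x < d := lt_of_le_of_ne (Nat.le_of_dvd (Nat.pos_of_ne_zero hd) ⟨z, hxz.symm⟩) hxd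
      rw [hg x hlt, zero_mul]
    · simp [padicDerivation, padicValNat.eq_zero_of_not_dvd hpy]
  · intro h
    exact absurd (Nat.mem_divisorsAntidiagonal.2 ⟨rfl, mul_ne_zero hd hp.out.ne_zero⟩) h

end WeightDerivation

section IterateWeightDerivation

variable {K : Type*} [CommRing K] [IsDomain K] {w : ArithmeticFunction K}
  (hw : IsCompletelyAdditive w) {a : ArithmeticFunction K}

theorem eq_zero_of_sum_mul_padicDerivation_eq_zero
    (ha : (w '' {p | p.Prime ∧ a p ≠ 0}).Infinite) {m : ℕ} {G : Fin m → ArithmeticFunction K}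
    (hG : ∀ (p : ℕ) [Fact p.Prime],
      ∑ j, G j * padicDerivation K p ((weightDerivation w hw)^[j] a) = 0) :
    G = 0 := by
  suffices h : ∀ d, (fun j => G j d) = 0 from funext fun j => ext fun d => congrFun (h d) j
  intro d
  induction d using Nat.strong_induction_on with
  | _ d ih =>
    rcases eq_or_ne d 0 with rfl | hd
    · ext j
      simp
    refine Matrix.eq_zero_of_forall_index_sum_mul_pow_eq_zero
      (f := fun i : Fin m => (ha.natEmbedding _ i : K))
      (fun i j hij => Fin.ext ((ha.natEmbedding _).injective (Subtype.ext hij))) fun i => ?_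
    obtain ⟨p, ⟨hp, hap⟩, hwp⟩ := (ha.natEmbedding _ i).2
    have : Fact p.Prime := ⟨hp⟩
    have hcoeff : ∑ j, G j d * (w p ^ (j : ℕ) * a p) = 0 := by
      have hdp := congrArg (fun f : ArithmeticFunction K => f (d * p)) (hG p)
      simp only [finsetSum_apply, ArithmeticFunction.zero_apply] at hdp
      rw [← hdp]
      refine Finset.sum_congr rfl fun j _ => ?_
      rw [mul_padicDerivation_apply_mul_prime p hd fun n hn => congrFun (ih n hn) j,
        iterate_weightDerivation_apply]
    simp only [← mul_assoc, ← Finset.sum_mul] at hcoeff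
    rw [← hwp]
    exact (mul_eq_zero.1 hcoeff).resolve_right hap

instance {R : Type*} [CommSemiring R] : FaithfulSMul R (ArithmeticFunction R) :=
  (faithfulSMul_iff_algebraMap_injective _ _).2 fun c d h => by
    simpa using congrArg (fun f : ArithmeticFunction R => f 1) h

theorem algebraicIndependent_iterate_weightDerivation [IsAddTorsionFree K]
    (ha : (w '' {p | p.Prime ∧ a p ≠ 0}).Infinite) (m : ℕ) :
    AlgebraicIndependent K fun j : Fin m => (weightDerivation w hw)^[j] a := by
  refine algebraicIndependent_of_aeval_pderiv fun Q hQ => congrFun ?_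
  refine eq_zero_of_sum_mul_padicDerivation_eq_zero hw ha fun p _ => ?_
  simp only [← smul_eq_mul]
  rw [← derivation_aeval, hQ, _root_.map_zero]

end IterateWeightDerivation

section LSeries

/-- The weight `n ↦ -log n`, multiplication by which differentiates a Dirichlet series. -/
noncomputable def negLogWeight : ArithmeticFunction ℂ :=
  ⟨fun n => -Complex.log n, by simp⟩

theorem isCompletelyAdditive_negLogWeight : IsCompletelyAdditive negLogWeight := fun m n hm hn => by
  simp only [negLogWeight, coe_mk, ← Complex.natCast_log]
  push_cast [Real.log_mul (Nat.cast_ne_zero.2 hm) (Nat.cast_ne_zero.2 hn)]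
  ring

theorem injOn_negLogWeight : Set.InjOn negLogWeight {n | n ≠ 0} := fun m hm n hn h => by
  simp only [negLogWeight, coe_mk, neg_inj, ← Complex.natCast_log, Complex.ofReal_inj] at h
  exact Nat.cast_injective (Real.log_injOn_pos (Set.mem_Ioi.2 (Nat.cast_pos.2 hm.bot_lt))
    (Set.mem_Ioi.2 (Nat.cast_pos.2 hn.bot_lt)) h)

/-- The derivation of the ring of arithmetic functions which corresponds to `d/ds` on Dirichlet
series. -/
noncomputable def negLogDerivation :
    Derivation ℂ (ArithmeticFunction ℂ) (ArithmeticFunction ℂ) :=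
  weightDerivation negLogWeight isCompletelyAdditive_negLogWeight

theorem coe_negLogDerivation (a : ArithmeticFunction ℂ) :
    ⇑(negLogDerivation a) = -LSeries.logMul a :=
  funext fun _ => neg_mul _ _

theorem LSeriesHasSum_negLogDerivation {a : ArithmeticFunction ℂ} {f : ℂ → ℂ} {σ : ℝ}
    (hf : ∀ s : ℂ, σ < s.re → LSeriesHasSum a s (f s)) {s : ℂ} (hs : σ < s.re) :
    LSeriesHasSum (negLogDerivation a) s (deriv f s) := by
  have habscissa : LSeries.abscissaOfAbsConv a < s.re := by
    obtain ⟨x, hσx, hxs⟩ := exists_between hs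
    exact (hf x hσx).LSeriesSummable.abscissaOfAbsConv_le.trans_lt (EReal.coe_lt_coe_iff.2 hxs)
  have heq : f =ᶠ[𝓝 s] LSeries a := by
    filter_upwards [(isOpen_lt continuous_const Complex.continuous_re).mem_nhds hs] with z hz
    exact (hf z hz).LSeries_eq.symm
  rw [heq.deriv_eq, LSeries_deriv habscissa, coe_negLogDerivation]
  exact (LSeriesSummable_logMul_of_lt_re habscissa).LSeriesHasSum.neg

theorem LSeriesHasSum_iterate_negLogDerivation {a : ArithmeticFunction ℂ} {f : ℂ → ℂ} {σ : ℝ}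
    (hf : ∀ s : ℂ, σ < s.re → LSeriesHasSum a s (f s)) (k : ℕ) {s : ℂ} (hs : σ < s.re) :
    LSeriesHasSum (negLogDerivation^[k] a) s (iteratedDeriv k f s) := by
  induction k generalizing s with
  | zero => simpa using hf s hs
  | succ k ih =>
    rw [Function.iterate_succ_apply', iteratedDeriv_succ]
    exact LSeriesHasSum_negLogDerivation (fun _ => ih) hs

theorem LSeriesHasSum_single {n : ℕ} (hn : n ≠ 0) (c s : ℂ) :
    LSeriesHasSum (Pi.single n c) s (c / (n : ℂ) ^ s) := by
  have h := hasSum_single (f := LSeries.term (Pi.single n c) s) n fun m hm => by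
    simp [LSeries.term_def, hm]
  simpa [LSeriesHasSum, LSeries.term_of_ne_zero hn] using h

theorem LSeriesHasSum_aeval {ι : Type*} {F : ι → ArithmeticFunction ℂ} {v : ι → ℂ} {s : ℂ}
    (hF : ∀ i, LSeriesHasSum (F i) s (v i)) (Q : MvPolynomial ι ℂ) :
    LSeriesHasSum (aeval F Q) s (eval v Q) := by
  induction Q using MvPolynomial.induction_on with
  | C c =>
    have hsingle : ⇑(algebraMap ℂ (ArithmeticFunction ℂ) c) = Pi.single 1 c := by
      ext n
      simp [Algebra.algebraMap_eq_smul_one, one_apply, Pi.single_apply]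
    simpa [hsingle] using LSeriesHasSum_single one_ne_zero c s
  | add P Q hP hQ => simpa using! hP.add hQ
  | mul_X P i hP =>
    rw [map_mul, map_mul, aeval_X, eval_X]
    exact LSeriesHasSum_mul hP (hF i)

variable {n : ℕ}

theorem eventually_LSeriesSummable_natCast {f : ℕ → ℂ} (hf : LSeries.abscissaOfAbsConv f < ⊤) :
    ∀ᶠ x : ℕ in atTop, LSeriesSummable f x := by
  obtain ⟨y, hfy, -⟩ := EReal.lt_iff_exists_real_btwn.1 hf
  filter_upwards [tendsto_natCast_atTop_atTop.eventually_ge_atTop y] with x hx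
  refine LSeriesSummable_of_abscissaOfAbsConv_lt_re (hfy.trans_le ?_)
  exact_mod_cast hx

theorem tendsto_pow_mul_pow_mul_LSeries {f : ℕ → ℂ} (h : ∀ m ≤ n + 1, f m = 0)
    (hf : LSeries.abscissaOfAbsConv f < ⊤) (k : ℕ) :
    Tendsto (fun x : ℕ => (x : ℂ) ^ k * ((n + 1) ^ x * LSeries f x)) atTop (𝓝 0) := by
  have hratio : ‖((n + 1 : ℕ) / (n + 2 : ℕ) : ℂ)‖ < 1 := by
    rw [norm_div, Complex.norm_natCast, Complex.norm_natCast, div_lt_one (by positivity)]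
    exact_mod_cast Nat.lt_succ_self (n + 1)
  have hdecay := (summable_pow_mul_geometric_of_norm_lt_one k hratio).tendsto_atTop_zero
  have hlead := (LSeries.tendsto_cpow_mul_atTop h hf).comp tendsto_natCast_atTop_atTop
  refine (zero_mul (f (n + 1 + 1)) ▸ hdecay.mul hlead).congr fun x => ?_
  have hne : (n + 2 : ℂ) ≠ 0 := by exact_mod_cast (n + 1).succ_ne_zero
  simp only [Function.comp_apply, Complex.ofReal_natCast, Complex.cpow_natCast, div_pow]
  push_cast
  rw [add_assoc (n : ℂ), one_add_one_eq_two]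
  field_simp

theorem tendsto_pow_mul_pow_mul_LSeries_sub {f : ℕ → ℂ} (h : ∀ m ≤ n, f m = 0)
    (hf : LSeries.abscissaOfAbsConv f < ⊤) (k : ℕ) :
    Tendsto (fun x : ℕ => (x : ℂ) ^ k * ((n + 1) ^ x * LSeries f x - f (n + 1))) atTop (𝓝 0) := by
  set g : ℕ → ℂ := Pi.single (n + 1) (f (n + 1)) with hg
  have hgsum (s : ℂ) : LSeriesHasSum g s (f (n + 1) / (n + 1 : ℕ) ^ s) :=
    LSeriesHasSum_single n.succ_ne_zero _ s
  have hsub_zero : ∀ m ≤ n + 1, (f - g) m = 0 := fun m hm => by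
    rcases hm.lt_or_eq with hlt | rfl
    · simp [hg, h m (Nat.lt_succ_iff.1 hlt), hlt.ne]
    · simp [hg]
  have hsub : LSeries.abscissaOfAbsConv (f - g) < ⊤ :=
    (LSeries.abscissaOfAbsConv_sub_le f g).trans_lt
      (max_lt hf ((hgsum 0).LSeriesSummable.abscissaOfAbsConv_le.trans_lt (EReal.coe_lt_top _)))
  refine (tendsto_pow_mul_pow_mul_LSeries hsub_zero hsub k).congr' ?_
  filter_upwards [eventually_LSeriesSummable_natCast hf] with x hx
  have hne : (n + 1 : ℂ) ≠ 0 := by exact_mod_cast n.succ_ne_zero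
  rw [LSeries_sub hx (hgsum x).LSeriesSummable, (hgsum x).LSeries_eq, Complex.cpow_natCast]
  push_cast
  field_simp

end LSeries

section Elimination

theorem polynomial_eq_zero_of_tendsto_eval {𝕜 α : Type*} [NormedField 𝕜] {l : Filter α} [l.NeBot]
    {z : α → 𝕜} (hz : Tendsto (fun x => ‖z x‖) l atTop) {q : Polynomial 𝕜}
    (hq : Tendsto (fun x => q.eval (z x)) l (𝓝 0)) : q = 0 := by
  rcases lt_or_ge 0 q.degree with hdeg | hdeg
  · exact absurd hq.norm (not_tendsto_nhds_of_tendsto_atTop (q.tendsto_norm_atTop hdeg hz) _)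
  · rw [Polynomial.eq_C_of_degree_le_zero hdeg] at hq ⊢
    simp only [Polynomial.eval_C, tendsto_const_nhds_iff] at hq
    rw [hq, Polynomial.C_0]

variable {S : Finset ℕ} {f : ℕ → ArithmeticFunction ℂ}

theorem tendsto_sum_mul_pow_of_sum_pow_mul_LSeries_eq_zero
    (hf : ∀ k ∈ S, LSeries.abscissaOfAbsConv (f k) < ⊤)
    (hsum : ∀ᶠ x : ℕ in atTop, ∑ k ∈ S, (x : ℂ) ^ k * LSeries (f k) x = 0)
    {n : ℕ} (hn : ∀ k ∈ S, ∀ m ≤ n, f k m = 0) :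
    Tendsto (fun x : ℕ => ∑ k ∈ S, f k (n + 1) * (x : ℂ) ^ k) atTop (𝓝 0) := by
  have hrem := tendsto_finsetSum S fun k hk =>
    tendsto_pow_mul_pow_mul_LSeries_sub (hn k hk) (hf k hk) k
  rw [Finset.sum_const_zero] at hrem
  refine (neg_zero (G := ℂ) ▸ hrem.neg).congr' ?_
  filter_upwards [hsum] with x hx
  calc -∑ k ∈ S, (x : ℂ) ^ k * ((n + 1) ^ x * LSeries (f k) x - f k (n + 1))
      = ∑ k ∈ S, f k (n + 1) * (x : ℂ) ^ k
          - (n + 1) ^ x * ∑ k ∈ S, (x : ℂ) ^ k * LSeries (f k) x := by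
        rw [Finset.mul_sum, ← Finset.sum_sub_distrib, ← Finset.sum_neg_distrib]
        exact Finset.sum_congr rfl fun k _ => by ring
    _ = ∑ k ∈ S, f k (n + 1) * (x : ℂ) ^ k := by rw [hx, mul_zero, sub_zero]

theorem eq_zero_of_sum_pow_mul_LSeries_eq_zero
    (hf : ∀ k ∈ S, LSeries.abscissaOfAbsConv (f k) < ⊤)
    (hsum : ∀ᶠ x : ℕ in atTop, ∑ k ∈ S, (x : ℂ) ^ k * LSeries (f k) x = 0) :
    ∀ k ∈ S, f k = 0 := by
  suffices h : ∀ n, ∀ k ∈ S, f k n = 0 from fun k hk => ext fun n => h n k hk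
  intro n
  induction n using Nat.strong_induction_on with
  | _ n ih =>
    rcases n with _ | n
    · simp
    set q : Polynomial ℂ := ∑ k ∈ S, Polynomial.monomial k (f k (n + 1)) with hq
    have hq_zero : q = 0 := by
      refine polynomial_eq_zero_of_tendsto_eval (z := fun x : ℕ => (x : ℂ)) (l := atTop)
        (by simpa using tendsto_natCast_atTop_atTop) ?_
      simpa [hq, Polynomial.eval_finsetSum] using tendsto_sum_mul_pow_of_sum_pow_mul_LSeries_eq_zero
        hf hsum fun k hk m hm => ih m (Nat.lt_succ_of_le hm) k hk
    intro k hk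
    have hcoeff : q.coeff k = f k (n + 1) := by
      simp [hq, Polynomial.coeff_monomial, hk]
    rw [← hcoeff, hq_zero, Polynomial.coeff_zero]

end Elimination

section DirichletEta

/-- The coefficients `(-1) ^ (n + 1)` of the Dirichlet eta function, with the value `0` at `0`
required of an arithmetic function. -/
def etaCoeff : ArithmeticFunction ℂ :=
  ⟨fun n => if n = 0 then 0 else (-1) ^ (n + 1), by simp⟩

theorem infinite_setOf_prime_etaCoeff_ne_zero : {p : ℕ | p.Prime ∧ etaCoeff p ≠ 0}.Infinite :=
  Nat.infinite_setOfPred_prime.mono fun p hp => ⟨hp, by simp [etaCoeff, Nat.Prime.ne_zero hp]⟩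

theorem hasSum_even_term_one {s : ℂ} (hs : 1 < s.re) :
    HasSum (fun n => if Even n then LSeries.term 1 s n else 0) (2 ^ (-s) * riemannZeta s) := by
  refine ((mul_right_injective₀ two_ne_zero).hasSum_iff fun n hn => if_neg ?_).1 ?_
  · exact fun h => hn (by obtain ⟨m, rfl⟩ := even_iff_two_dvd.1 h; exact ⟨m, rfl⟩)
  · refine ((LSeriesHasSum_one hs).mul_left (2 ^ (-s))).congr_fun fun m => ?_
    rcases eq_or_ne m 0 with rfl | hm
    · simp
    rw [LSeries.term_of_ne_zero hm, Function.comp_apply, if_pos (even_two_mul m),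
      LSeries.term_of_ne_zero (mul_ne_zero two_ne_zero hm), Nat.cast_mul,
      Complex.natCast_mul_natCast_cpow, Complex.cpow_neg]
    simp [mul_comm]

theorem term_etaCoeff (s : ℂ) (n : ℕ) : LSeries.term etaCoeff s n =
    LSeries.term 1 s n - 2 * if Even n then LSeries.term 1 s n else 0 := by
  rcases eq_or_ne n 0 with rfl | hn
  · simp
  rw [LSeries.term_of_ne_zero hn, LSeries.term_of_ne_zero hn]
  split_ifs with heven
  · have hone : etaCoeff n = -1 := by simp [etaCoeff, hn, heven.add_one.neg_one_pow]
    rw [hone, Pi.one_apply]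
    ring
  · have hone : etaCoeff n = 1 := by
      simp [etaCoeff, hn, (Nat.not_even_iff_odd.1 heven).add_one.neg_one_pow]
    rw [hone, Pi.one_apply, mul_zero, sub_zero]

theorem LSeriesHasSum_etaCoeff {s : ℂ} (hs : 1 < s.re) :
    LSeriesHasSum etaCoeff s ((1 - 2 ^ (1 - s)) * riemannZeta s) := by
  have hsum : HasSum (LSeries.term etaCoeff s)
      (riemannZeta s - 2 * (2 ^ (-s) * riemannZeta s)) := by
    simp_rw [funext (term_etaCoeff s)]
    exact HasSum.sub (LSeriesHasSum_one hs) ((hasSum_even_term_one hs).mul_left 2)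
  have hvalue : (1 - 2 ^ (1 - s)) * riemannZeta s =
      riemannZeta s - 2 * (2 ^ (-s) * riemannZeta s) := by
    rw [sub_eq_add_neg 1 s, Complex.cpow_add _ _ two_ne_zero, Complex.cpow_one]
    ring
  exact hvalue ▸ hsum

end DirichletEta

section Transcendence

variable {σ : ℝ}

theorem eq_zero_of_eval_cons_eq_zero {m : ℕ} {F : Fin m → ArithmeticFunction ℂ}
    {v : ℂ → Fin m → ℂ} (hF : ∀ s : ℂ, σ < s.re → ∀ j, LSeriesHasSum (F j) s (v s j))
    (hindep : AlgebraicIndependent ℂ F) {P : MvPolynomial (Fin (m + 1)) ℂ}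
    (hP : ∀ s : ℂ, σ < s.re → eval (Fin.cons s (v s) : Fin (m + 1) → ℂ) P = 0) : P = 0 := by
  set q := finSuccEquiv ℂ m P
  have haeval (k : ℕ) {s : ℂ} (hs : σ < s.re) :
      LSeriesHasSum (aeval F (q.coeff k)) s (eval (v s) (q.coeff k)) :=
    LSeriesHasSum_aeval (hF s hs) _
  have hcoeff : ∀ k ∈ q.support, aeval F (q.coeff k) = 0 := by
    refine eq_zero_of_sum_pow_mul_LSeries_eq_zero (fun k _ => ?_) ?_
    · exact (haeval k (s := (σ + 1 : ℝ)) (by simp)).LSeriesSummable.abscissaOfAbsConv_le.trans_lt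
        (EReal.coe_lt_top _)
    · filter_upwards [tendsto_natCast_atTop_atTop.eventually_gt_atTop σ] with x hx
      rw [← hP x (by simpa using hx), eval_eq_eval_mv_eval', Polynomial.eval_map,
        Polynomial.eval₂_eq_sum, Polynomial.sum_def]
      refine Finset.sum_congr rfl fun k _ => ?_
      rw [(haeval k (by simpa using hx)).LSeries_eq, mul_comm]
  have hq_zero : q = 0 := Polynomial.support_eq_empty.1 <| Finset.eq_empty_of_forall_notMem
    fun k hk => Polynomial.mem_support_iff.1 hk (algebraicIndependent_iff.1 hindep _ (hcoeff k hk))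
  exact (EmbeddingLike.map_eq_zero_iff (f := finSuccEquiv ℂ m)).1 hq_zero

theorem algebraicIndependent_iterate_negLogDerivation {a : ArithmeticFunction ℂ}
    (ha : {p : ℕ | p.Prime ∧ a p ≠ 0}.Infinite) (m : ℕ) :
    AlgebraicIndependent ℂ fun j : Fin m => negLogDerivation^[j] a :=
  algebraicIndependent_iterate_weightDerivation isCompletelyAdditive_negLogWeight
    (ha.image (injOn_negLogWeight.mono fun _ hp => hp.1.ne_zero)) m

theorem ite_eq_cons {α : Type*} (x : α) (u : ℕ → α) (m : ℕ) :
    (fun i : Fin (m + 1) => if i.val = 0 then x else u (i.val - 1)) =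
      Fin.cons x fun j : Fin m => u j := by
  ext i
  cases i using Fin.cases <;> simp

theorem dirichletEta_diffTranscendental_general {a : ArithmeticFunction ℂ} {f : ℂ → ℂ}
    (ha : {p : ℕ | p.Prime ∧ a p ≠ 0}.Infinite)
    (hf : ∀ s : ℂ, σ < s.re → LSeriesHasSum a s (f s)) :
    ¬ ∃ (n : ℕ) (P : MvPolynomial (Fin (n + 2)) ℂ),
      P ≠ 0 ∧ ∀ s : ℂ, σ < s.re →
        MvPolynomial.eval
          (fun i : Fin (n + 2) =>
            if i.val = 0 then s else iteratedDeriv (i.val - 1) f s) P = 0 := by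
  rintro ⟨n, P, hP, hzero⟩
  refine hP (eq_zero_of_eval_cons_eq_zero
    (fun s hs j => LSeriesHasSum_iterate_negLogDerivation hf j hs)
    (algebraicIndependent_iterate_negLogDerivation ha (n + 1)) fun s hs => ?_)
  rw [← ite_eq_cons s (fun k => iteratedDeriv k f s) (n + 1)]
  exact hzero s hs

end Transcendence

/-- The Dirichlet eta function — the entire function satisfying
`η s = (1 - 2^(1-s)) * ζ s` for `s ≠ 1` (which agrees with `∑ (-1)^(n+1) n^(-s)` for
`Re s > 1`) — is differentially transcendental: there are no `n ∈ ℕ` and nonzero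
polynomial `P ∈ ℂ[X₀, …, X_{n+1}]` with `P (s, η s, η' s, …, η⁽ⁿ⁾ s) = 0` for all `s`. -/
theorem dirichletEta_diffTranscendental (η : ℂ → ℂ)
    (hent : Differentiable ℂ η)
    (hformula : ∀ s : ℂ, s ≠ 1 → η s = (1 - (2 : ℂ) ^ ((1 : ℂ) - s)) * riemannZeta s) :
    ¬ ∃ (n : ℕ) (P : MvPolynomial (Fin (n + 2)) ℂ),
      P ≠ 0 ∧ ∀ s : ℂ,
        MvPolynomial.eval
          (fun i : Fin (n + 2) =>
            if i.val = 0 then s else iteratedDeriv (i.val - 1) η s) P = 0 := by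
  have hsum (s : ℂ) (hs : 1 < s.re) : LSeriesHasSum etaCoeff s (η s) :=
    hformula s (fun h => by simp [h] at hs) ▸ LSeriesHasSum_etaCoeff hs
  rintro ⟨n, P, hP, hzero⟩
  exact dirichletEta_diffTranscendental_general infinite_setOf_prime_etaCoeff_ne_zero hsum
    ⟨n, P, hP, fun s _ => hzero s⟩
end
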